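/- arXiv:1101.1488 — 2 statements merged into one kernel-verified Lean document; each statement's English description precedes it below -/
import Mathlib

section
/- There is an absolute constant C > 0 with the following property. Let P and Q be disjoint finite sets of points in the Euclidean plane ℝ² with |P| = |Q| = n, and suppose that every line in the plane contains at most r points of P ∪ Q. Then the number of bichromatic induced lines of (P, Q) is at least C · n · (2n − r). -/
open Set

noncomputable section

/-- The line through two points of the plane, as a set. -/
def lineThrough (p q : ℝ × ℝ) : Set (ℝ × ℝ) := (affineSpan ℝ {p, q} : AffineSubspace ℝ (ℝ × ℝ))

/-- A subset of the plane is a line if it is the affine span of two distinct points. -/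
def IsLine (L : Set (ℝ × ℝ)) : Prop := ∃ p q : ℝ × ℝ, p ≠ q ∧ L = lineThrough p q

/-- The richness of a line `L` with respect to a finite point set `S`:
the number of points of `S` incident on `L`. -/
def richness (S : Finset (ℝ × ℝ)) (L : Set (ℝ × ℝ)) : ℕ := ((S : Set (ℝ × ℝ)) ∩ L).ncard

/-- The lines induced by a finite point set `S`: lines passing through
at least two distinct points of `S`. -/
def InducedLines (S : Finset (ℝ × ℝ)) : Set (Set (ℝ × ℝ)) :=
  {L | IsLine L ∧ ∃ p ∈ S, ∃ q ∈ S, p ≠ q ∧ p ∈ L ∧ q ∈ L}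

/-- The bichromatic induced lines of a bichromatic point set `(P, Q)`:
lines incident on at least one point of `P` and at least one point of `Q`
(for disjoint `P`, `Q` such a line passes through two distinct points of `P ∪ Q`). -/
def BichromLines (P Q : Finset (ℝ × ℝ)) : Set (Set (ℝ × ℝ)) :=
  {L | IsLine L ∧ (∃ p ∈ P, p ∈ L) ∧ (∃ q ∈ Q, q ∈ L)}

/-- slope of an edge -/
def sl (e : (ℝ × ℝ) × (ℝ × ℝ)) : ℝ := (e.2.2 - e.1.2) / (e.2.1 - e.1.1)
/-- height of the line of an edge over `x` -/
def vl (e : (ℝ × ℝ) × (ℝ × ℝ)) (x : ℝ) : ℝ := e.1.2 + sl e * (x - e.1.1)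
/-- proper crossing -/
def Cr (e e' : (ℝ × ℝ) × (ℝ × ℝ)) : Prop :=
  ∃ x1 x2 : ℝ, e.1.1 ≤ x1 ∧ e'.1.1 ≤ x1 ∧ x1 < x2 ∧ x2 ≤ e.2.1 ∧ x2 ≤ e'.2.1 ∧
    vl e x1 < vl e' x1 ∧ vl e' x2 < vl e x2

lemma vl_left (e : (ℝ × ℝ) × (ℝ × ℝ)) : vl e e.1.1 = e.1.2 := by simp [vl]

lemma vl_right (e : (ℝ × ℝ) × (ℝ × ℝ)) (h : e.1.1 < e.2.1) : vl e e.2.1 = e.2.2 := by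
  have : e.2.1 - e.1.1 ≠ 0 := (sub_pos.2 h).ne'
  unfold vl sl
  field_simp
  ring

/-- good geometric graph -/
structure GG (V : Finset (ℝ × ℝ)) (E : Finset ((ℝ × ℝ) × (ℝ × ℝ))) : Prop where
  inj : ∀ u ∈ V, ∀ v ∈ V, u.1 = v.1 → u = v
  l : ∀ e ∈ E, e.1 ∈ V
  r : ∀ e ∈ E, e.2 ∈ V
  lt : ∀ e ∈ E, e.1.1 < e.2.1
  free : ∀ e ∈ E, ∀ v ∈ V, e.1.1 < v.1 → v.1 < e.2.1 → v.2 ≠ vl e v.1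

/-- the region between two edges and its first vertex -/
structure Rg (V : Finset (ℝ × ℝ)) (E : Finset ((ℝ × ℝ) × (ℝ × ℝ)))
    (e e' : (ℝ × ℝ) × (ℝ × ℝ)) (v : ℝ × ℝ) : Prop where
  he : e ∈ E
  he' : e' ∈ E
  same : e'.1 = e.1
  slt : sl e < sl e'
  next : ∀ f ∈ E, f.1 = e.1 → sl e < sl f → sl e' ≤ sl f
  hv : v ∈ V
  lv : e.1.1 < v.1
  ve : v.1 ≤ e.2.1
  ve' : v.1 ≤ e'.2.1
  lo : vl e v.1 ≤ v.2
  hi : v.2 ≤ vl e' v.1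
  first : ∀ u ∈ V, e.1.1 < u.1 → u.1 < v.1 → u.2 < vl e u.1 ∨ vl e' u.1 < u.2

lemma vl_lt_of_sl {e e' : (ℝ × ℝ) × (ℝ × ℝ)} (h : e'.1 = e.1) (hs : sl e < sl e') {x : ℝ}
    (hx : e.1.1 < x) : vl e x < vl e' x := by
  unfold vl
  rw [h]
  have := mul_lt_mul_of_pos_right hs (sub_pos.2 hx)
  linarith

lemma Rg.exists {V E} (hG : GG V E) {e} (he : e ∈ E) (ht : ∃ f ∈ E, f.1 = e.1 ∧ sl e < sl f) :
    ∃ e' v, Rg V E e e' v := by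
  classical
  obtain ⟨e', he', hmin⟩ := (E.filter (fun f => f.1 = e.1 ∧ sl e < sl f)).exists_min_image sl
    (by obtain ⟨f, hf, h⟩ := ht; exact ⟨f, Finset.mem_filter.2 ⟨hf, h⟩⟩)
  rw [Finset.mem_filter] at he'
  obtain ⟨he', hs, hlt⟩ := he'
  have hlt1 := hG.lt e he
  have hlt2 := hG.lt e' he'
  have hr1 := vl_right e hlt1
  have hr2 := vl_right e' hlt2
  have hs1 : e'.1.1 = e.1.1 := by rw [hs]
  obtain ⟨v, hv, hvmin⟩ := (V.filter (fun v => e.1.1 < v.1 ∧ v.1 ≤ e.2.1 ∧ v.1 ≤ e'.2.1 ∧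
      vl e v.1 ≤ v.2 ∧ v.2 ≤ vl e' v.1)).exists_min_image Prod.fst (by
    rcases le_total e.2.1 e'.2.1 with h | h
    · refine ⟨e.2, Finset.mem_filter.2 ⟨hG.r e he, hlt1, le_rfl, h, hr1.le, ?_⟩⟩
      rw [← hr1]; exact (vl_lt_of_sl hs hlt hlt1).le
    · refine ⟨e'.2, Finset.mem_filter.2 ⟨hG.r e' he', hs1 ▸ hlt2, h, le_rfl, ?_, hr2.ge⟩⟩
      rw [← hr2]; exact (vl_lt_of_sl hs hlt (hs1 ▸ hlt2)).le)
  rw [Finset.mem_filter] at hv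
  obtain ⟨hv, h1, h2, h3, h4, h5⟩ := hv
  refine ⟨e', v, he, he', hs, hlt, ?_, hv, h1, h2, h3, h4, h5, ?_⟩
  · intro f hf h h'
    exact hmin f (Finset.mem_filter.2 ⟨hf, h, h'⟩)
  · intro u hu hu1 hu2
    by_contra! hc
    have := hvmin u (Finset.mem_filter.2 ⟨hu, hu1, by linarith, by linarith, hc.1, hc.2⟩)
    linarith

lemma Rg.no {V E} (hG : GG V E) (hcr : ∀ e ∈ E, ∀ e' ∈ E, ¬ Cr e e') {e1 e1' e2 e2' v}
    (R1 : Rg V E e1 e1' v) (R2 : Rg V E e2 e2' v) (hflag : v = e1'.2 ↔ v = e2'.2)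
    (hlt : e1.1.1 < e2.1.1) : False := by
  have hu2 := hG.l _ R2.he
  have hl1 : e1'.1.1 = e1.1.1 := by rw [R1.same]
  have hl2 : e2'.1.1 = e2.1.1 := by rw [R2.same]
  have hy2 : e2'.1.2 = e2.1.2 := by rw [R2.same]
  have A1 := vl_lt_of_sl R1.same R1.slt R1.lv
  have A2 := vl_lt_of_sl R2.same R2.slt R2.lv
  have L2 := vl_left e2
  have L2' := vl_left e2'
  rw [hl2, hy2] at L2'
  have hF := R1.first _ hu2 hlt R2.lv
  by_cases hf : v = e1'.2
  · have hf2 := hflag.1 hf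
    have r1 := vl_right e1' (hG.lt _ R1.he')
    have r2 := vl_right e2' (hG.lt _ R2.he')
    rw [← hf] at r1
    rw [← hf2] at r2
    rcases hF with hF | hF
    · exact hcr _ R2.he' _ R1.he ⟨e2.1.1, v.1, by linarith, by linarith, R2.lv, R2.ve', R1.ve,
        by linarith, by linarith⟩
    · exact hcr _ R1.he' _ R2.he ⟨e2.1.1, v.1, by linarith, by linarith, R2.lv, R1.ve', R2.ve,
        by linarith, by linarith⟩
  · have hf2 : ¬ v = e2'.2 := fun h => hf (hflag.2 h)
    have key : ∀ {e e'}, Rg V E e e' v → ¬ v = e'.2 → v.2 < vl e' v.1 := by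
      intro e e' R h
      refine lt_of_le_of_ne R.hi (hG.free _ R.he' _ R.hv (by rw [R.same]; exact R.lv) ?_)
      exact lt_of_le_of_ne R.ve' (fun h' => h (hG.inj _ R.hv _ (hG.r _ R.he') h'))
    have k1 := key R1 hf
    have k2 := key R2 hf2
    have := R1.lo
    have := R2.lo
    rcases hF with hF | hF
    · exact hcr _ R2.he' _ R1.he ⟨e2.1.1, v.1, by linarith, by linarith, R2.lv, R2.ve', R1.ve,
        by linarith, by linarith⟩
    · exact hcr _ R1.he' _ R2.he ⟨e2.1.1, v.1, by linarith, by linarith, R2.lv, R1.ve', R2.ve,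
        by linarith, by linarith⟩

lemma GG.eq_of_sl {V E} (hG : GG V E) {e f} (he : e ∈ E) (hf : f ∈ E) (h : e.1 = f.1)
    (hs : sl e = sl f) : e = f := by
  have hv : ∀ x, vl e x = vl f x := by intro x; unfold vl; rw [h, hs]
  have h1 := hG.lt e he
  have h2 := hG.lt f hf
  have r1 := vl_right e h1
  have r2 := vl_right f h2
  rcases lt_trichotomy e.2.1 f.2.1 with hh | hh | hh
  · exact absurd (by rw [← hv, r1]) (hG.free f hf _ (hG.r e he) (h ▸ h1) hh)
  · exact Prod.ext h (hG.inj _ (hG.r e he) _ (hG.r f hf) hh)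
  · exact absurd (by rw [hv, r2]) (hG.free e he _ (hG.r f hf) (h ▸ h2) hh)

lemma noncross {V E} (hG : GG V E) (hcr : ∀ e ∈ E, ∀ e' ∈ E, ¬ Cr e e') :
    E.card ≤ 3 * V.card := by
  classical
  set T := E.filter (fun e => ∃ f ∈ E, f.1 = e.1 ∧ sl e < sl f) with hT
  set U := E.filter (fun e => ¬ ∃ f ∈ E, f.1 = e.1 ∧ sl e < sl f) with hU
  have hsum : T.card + U.card = E.card := Finset.card_filter_add_card_filter_not _
  have hUc : U.card ≤ V.card := by
    refine Finset.card_le_card_of_injOn Prod.fst ?_ ?_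
    · intro e he
      exact hG.l e (Finset.mem_filter.1 he).1
    · intro e he f hf h
      have he := Finset.mem_filter.1 he
      have hf := Finset.mem_filter.1 hf
      push Not at he hf
      exact hG.eq_of_sl he.1 hf.1 h (le_antisymm (hf.2 _ he.1 h) (he.2 _ hf.1 h.symm))
  have hR : ∀ e, e ∈ T → ∃ p : ((ℝ × ℝ) × (ℝ × ℝ)) × (ℝ × ℝ), Rg V E e p.1 p.2 := by
    intro e he
    obtain ⟨e', v, h⟩ := Rg.exists hG (Finset.mem_filter.1 he).1 (Finset.mem_filter.1 he).2
    exact ⟨(e', v), h⟩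
  choose! φ hφ using hR
  have hTc : T.card ≤ (V ×ˢ (Finset.univ : Finset Bool)).card := by
    refine Finset.card_le_card_of_injOn (fun e => ((φ e).2, decide ((φ e).2 = (φ e).1.2))) ?_ ?_
    · intro e he
      exact Finset.mem_coe.2 (Finset.mem_product.2 ⟨(hφ e he).hv, Finset.mem_univ _⟩)
    · intro e he f hf h
      simp only [Prod.mk.injEq, decide_eq_decide] at h
      obtain ⟨h1, h2⟩ := h
      have R1 := hφ e he
      have R2 := hφ f hf
      rw [← h1] at R2 h2
      rcases lt_trichotomy e.1.1 f.1.1 with hh | hh | hh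
      · exact (Rg.no hG hcr R1 R2 h2 hh).elim
      · have hs := hG.inj _ (hG.l _ R1.he) _ (hG.l _ R2.he) hh
        have B : ∀ {e1 e1' e2 e2' v}, Rg V E e1 e1' v → Rg V E e2 e2' v → e1.1 = e2.1 →
            (v = e1'.2 ↔ v = e2'.2) → ¬ sl e1 < sl e2 := by
          intro e1 e1' e2 e2' v R1 R2 hs hfl hlt
          have h3 := R1.next _ R2.he hs.symm hlt
          by_cases hv : v = e1'.2
          · have : e1' = e2' := Prod.ext (by rw [R1.same, R2.same, hs]) (by rw [← hv, ← hfl.1 hv])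
            have := R2.slt
            subst e1'
            linarith
          · have k1 : v.2 < vl e1' v.1 := by
              refine lt_of_le_of_ne R1.hi (hG.free _ R1.he' _ R1.hv (by rw [R1.same]; exact R1.lv) ?_)
              exact lt_of_le_of_ne R1.ve' (fun h' => hv (hG.inj _ R1.hv _ (hG.r _ R1.he') h'))
            have k2 := R2.lo
            have k3 : vl e1' v.1 ≤ vl e2 v.1 := by
              have := R2.lv
              unfold vl
              rw [R1.same, hs]
              have := mul_le_mul_of_nonneg_right h3 (sub_pos.2 this).le
              linarith
            linarith
        exact hG.eq_of_sl R1.he R2.he hs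
          (le_antisymm (not_lt.1 (B R2 R1 hs.symm h2.symm)) (not_lt.1 (B R1 R2 hs h2)))
      · exact (Rg.no hG hcr R2 R1 h2.symm hh).elim
  rw [Finset.card_product] at hTc
  simp at hTc
  omega
open Classical in
lemma cross_weak {V E} (hG : GG V E) :
    E.card ≤ 3 * V.card + ((E ×ˢ E).filter (fun p => Cr p.1 p.2)).card := by
  set X := (E ×ˢ E).filter (fun p => Cr p.1 p.2)
  have h1 : (E \ X.image Prod.fst).card ≤ 3 * V.card := by
    apply noncross
    · constructor
      · exact hG.inj
      · intro e he; exact hG.l e (Finset.mem_sdiff.1 he).1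
      · intro e he; exact hG.r e (Finset.mem_sdiff.1 he).1
      · intro e he; exact hG.lt e (Finset.mem_sdiff.1 he).1
      · intro e he; exact hG.free e (Finset.mem_sdiff.1 he).1
    · intro e he e' he' h
      rw [Finset.mem_sdiff] at he he'
      apply he.2
      exact Finset.mem_image.2 ⟨(e, e'), Finset.mem_filter.2
        ⟨Finset.mem_product.2 ⟨he.1, he'.1⟩, h⟩, rfl⟩
  have h2 := Finset.le_card_sdiff (X.image Prod.fst) E
  have h3 : (X.image Prod.fst).card ≤ X.card := Finset.card_image_le
  omega

open Classical in
lemma count_fun {α : Type*} [Fintype α] (q : ℕ) [NeZero q] (T : Finset α) :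
    ((Finset.univ : Finset (α → Fin q)).filter (fun f => ∀ t ∈ T, f t = 0)).card * q ^ T.card
      = q ^ Fintype.card α := by
  have : (Finset.univ : Finset (α → Fin q)).filter (fun f => ∀ t ∈ T, f t = 0)
      = Fintype.piFinset (fun a => if a ∈ T then ({0} : Finset (Fin q)) else Finset.univ) := by
    ext f
    simp only [Finset.mem_filter, Finset.mem_univ, true_and, Fintype.mem_piFinset]
    refine forall_congr' fun a => ?_
    by_cases h : a ∈ T <;> simp [h]
  rw [this, Fintype.card_piFinset]
  have h2 : ∀ a, (if a ∈ T then ({0} : Finset (Fin q)) else Finset.univ).card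
      = if a ∈ T then 1 else q := by
    intro a; split_ifs <;> simp
  simp_rw [h2]
  rw [Finset.prod_ite]
  simp only [Finset.prod_const_one, one_mul, Finset.prod_const]
  rw [← pow_add]
  congr 1
  have := Finset.card_filter_add_card_filter_not (s := (Finset.univ : Finset α)) (fun a => a ∈ T)
  simp at this ⊢
  omega

/-- endpoints as a finset -/
lemma Cr.distinct {e e' : (ℝ × ℝ) × (ℝ × ℝ)} (h1 : e.1.1 < e.2.1) (h2 : e'.1.1 < e'.2.1)
    (h : Cr e e') : e.1 ≠ e'.1 ∧ e.2 ≠ e'.2 ∧ e.1 ≠ e'.2 ∧ e.2 ≠ e'.1 := by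
  obtain ⟨x1, x2, a1, a2, a3, a4, a5, a6, a7⟩ := h
  have r1 := vl_right e h1
  have r2 := vl_right e' h2
  refine ⟨fun h => ?_, fun h => ?_, fun h => ?_, fun h => ?_⟩
  · unfold vl at a6 a7
    rw [h] at a6 a7 a1
    nlinarith
  · have c : ∀ x, vl e x - vl e' x = (sl e - sl e') * (x - e.2.1) := by
      intro x
      have : vl e x - vl e' x - (vl e e.2.1 - vl e' e'.2.1) = (sl e - sl e') * (x - e.2.1) := by
        unfold vl
        rw [h]; ring
      rw [r1, r2, h] at this
      rw [h]
      linarith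
    have c1 := c x1
    have c2 := c x2
    nlinarith
  · rw [h] at a1; linarith
  · rw [h] at a4; linarith

lemma sum_count {α β : Type*} [Fintype α] [DecidableEq α] (q : ℕ) [NeZero q] (s : Finset β) (T : β → Finset α)
    [∀ (f : α → Fin q) (b : β), Decidable (∀ t ∈ T b, f t = 0)]
    (c : ℕ) (hc : ∀ b ∈ s, (T b).card = c) :
    (∑ f : α → Fin q, (s.filter (fun b => ∀ t ∈ T b, f t = 0)).card) * q ^ c
      = s.card * q ^ Fintype.card α := by
  simp_rw [Finset.card_filter]
  rw [Finset.sum_comm, Finset.sum_mul]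
  have : ∀ b ∈ s, (∑ f : α → Fin q, if (∀ t ∈ T b, f t = 0) then 1 else 0) * q ^ c
      = q ^ Fintype.card α := by
    intro b hb
    rw [← Finset.card_filter, ← hc b hb]
    convert count_fun q (T b)
  rw [Finset.sum_congr rfl this]
  simp

open Classical in
lemma cross_strong {V E} (hG : GG V E) (q : ℕ) (hq : 1 ≤ q) :
    E.card * q ^ 2 ≤ 3 * V.card * q ^ 3 + ((E ×ˢ E).filter (fun p => Cr p.1 p.2)).card := by
  have : NeZero q := ⟨by omega⟩
  set X := (E ×ˢ E).filter (fun p => Cr p.1 p.2) with hX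
  let tv : ℝ × ℝ → Finset V := fun v => Finset.univ.filter (fun a => a.1 = v)
  have tvm : ∀ v (a : V), a ∈ tv v ↔ a.1 = v := by intro v a; simp [tv]
  have tvc : ∀ v ∈ V, (tv v).card = 1 := by
    intro v hv
    rw [Finset.card_eq_one]
    exact ⟨⟨v, hv⟩, by ext a; simp [tvm, Subtype.ext_iff]⟩
  have tvd : ∀ u v, u ≠ v → Disjoint (tv u) (tv v) := by
    intro u v huv
    rw [Finset.disjoint_left]
    intro a h1 h2
    rw [tvm] at h1 h2
    exact huv (h1.symm.trans h2)
  let te : (ℝ × ℝ) × (ℝ × ℝ) → Finset V := fun e => tv e.1 ∪ tv e.2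
  have tec : ∀ e ∈ E, (te e).card = 2 := by
    intro e he
    have : e.1 ≠ e.2 := fun h => (hG.lt e he).ne (by rw [h])
    simp only [te]
    rw [Finset.card_union_of_disjoint (tvd _ _ this), tvc _ (hG.l e he), tvc _ (hG.r e he)]
  have S1 := sum_count q V tv 1 tvc
  have S2 := sum_count q E te 2 tec
  have S4 := sum_count q X (fun p => te p.1 ∪ te p.2) 4 (by
    intro p hp
    rw [hX, Finset.mem_filter, Finset.mem_product] at hp
    obtain ⟨⟨h1, h2⟩, h⟩ := hp
    obtain ⟨d1, d2, d3, d4⟩ := h.distinct (hG.lt _ h1) (hG.lt _ h2)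
    rw [Finset.card_union_of_disjoint, tec _ h1, tec _ h2]
    simp only [te, Finset.disjoint_union_left, Finset.disjoint_union_right]
    exact ⟨⟨tvd _ _ d1, tvd _ _ d4⟩, ⟨tvd _ _ d3, tvd _ _ d2⟩⟩)
  have main : ∀ f : V → Fin q, (E.filter (fun b => ∀ t ∈ te b, f t = 0)).card ≤
      3 * (V.filter (fun b => ∀ t ∈ tv b, f t = 0)).card +
      (X.filter (fun p => ∀ t ∈ te p.1 ∪ te p.2, f t = 0)).card := by
    intro f
    have hg : GG (V.filter (fun b => ∀ t ∈ tv b, f t = 0))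
        (E.filter (fun b => ∀ t ∈ te b, f t = 0)) := by
      constructor
      · intro u hu v hv
        exact hG.inj u (Finset.mem_filter.1 hu).1 v (Finset.mem_filter.1 hv).1
      · intro e he
        rw [Finset.mem_filter] at he ⊢
        exact ⟨hG.l e he.1, fun t ht => he.2 t (Finset.mem_union_left _ ht)⟩
      · intro e he
        rw [Finset.mem_filter] at he ⊢
        exact ⟨hG.r e he.1, fun t ht => he.2 t (Finset.mem_union_right _ ht)⟩
      · intro e he; exact hG.lt e (Finset.mem_filter.1 he).1
      · intro e he v hv
        exact hG.free e (Finset.mem_filter.1 he).1 v (Finset.mem_filter.1 hv).1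
    refine (cross_weak hg).trans ?_
    gcongr
    intro p hp
    simp only [Finset.mem_filter, Finset.mem_product, hX] at hp ⊢
    refine ⟨⟨⟨hp.1.1.1, hp.1.2.1⟩, hp.2⟩, fun t ht => ?_⟩
    rcases Finset.mem_union.1 ht with ht | ht
    · exact hp.1.1.2 t ht
    · exact hp.1.2.2 t ht
  have tot := Finset.sum_le_sum (s := (Finset.univ : Finset (V → Fin q))) (fun f _ => main f)
  rw [Finset.sum_add_distrib, ← Finset.mul_sum] at tot
  have hpos : 0 < q ^ Fintype.card V := by positivity
  have h5 := Nat.mul_le_mul_right (q ^ 4) tot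
  refine Nat.le_of_mul_le_mul_right ?_ hpos
  calc E.card * q ^ 2 * q ^ Fintype.card V = (E.card * q ^ Fintype.card V) * q ^ 2 := by ring
    _ = _ := by rw [← S2]
    _ ≤ _ := (le_of_eq (by ring)).trans h5
    _ = 3 * (V.card * q ^ Fintype.card V) * q ^ 3 + X.card * q ^ Fintype.card V := by
        rw [← S1, ← S4]; ring
    _ = _ := by ring
/-- incidence with a non-vertical line -/
def On (l p : ℝ × ℝ) : Prop := p.2 = l.1 * p.1 + l.2

lemma vl_of_on {l : ℝ × ℝ} {e : (ℝ × ℝ) × (ℝ × ℝ)} (h : e.1.1 < e.2.1) (h1 : On l e.1)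
    (h2 : On l e.2) : sl e = l.1 ∧ ∀ x, vl e x = l.1 * x + l.2 := by
  unfold On at h1 h2
  have hs : sl e = l.1 := by
    unfold sl
    rw [h1, h2, div_eq_iff (sub_pos.2 h).ne']
    ring
  refine ⟨hs, fun x => ?_⟩
  unfold vl
  rw [hs, h1]; ring

open Classical in
lemma szekely (V M : Finset (ℝ × ℝ)) (k q : ℕ) (hq : 1 ≤ q)
    (hinj : ∀ u ∈ V, ∀ v ∈ V, u.1 = v.1 → u = v)
    (hM : ∀ l ∈ M, k ≤ (V.filter (fun p => On l p)).card) :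
    M.card * (k - 1) * q ^ 2 ≤ 3 * V.card * q ^ 3 + M.card ^ 2 := by
  set E := (V ×ˢ V).filter (fun e => e.1.1 < e.2.1 ∧ (∃ l ∈ M, On l e.1 ∧ On l e.2) ∧
    ∀ v ∈ V, e.1.1 < v.1 → v.1 < e.2.1 → v.2 ≠ vl e v.1) with hE
  have hEm : ∀ e, e ∈ E ↔ (e.1 ∈ V ∧ e.2 ∈ V) ∧ e.1.1 < e.2.1 ∧ (∃ l ∈ M, On l e.1 ∧ On l e.2) ∧
    ∀ v ∈ V, e.1.1 < v.1 → v.1 < e.2.1 → v.2 ≠ vl e v.1 := by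
    intro e; rw [hE, Finset.mem_filter, Finset.mem_product]
  have hG : GG V E := by
    constructor
    · exact hinj
    · intro e he; exact ((hEm e).1 he).1.1
    · intro e he; exact ((hEm e).1 he).1.2
    · intro e he; exact ((hEm e).1 he).2.1
    · intro e he; exact ((hEm e).1 he).2.2.2
  have hcr := cross_strong hG q hq
  have hX : ((E ×ˢ E).filter (fun p => Cr p.1 p.2)).card ≤ (M ×ˢ M).card := by
    have hl : ∀ e, e ∈ E → ∃ l ∈ M, On l e.1 ∧ On l e.2 := fun e he => ((hEm e).1 he).2.2.1
    choose! φ hφM hφ1 hφ2 using hl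
    refine Finset.card_le_card_of_injOn (fun p => (φ p.1, φ p.2)) ?_ ?_
    · intro p hp
      have hp := (Finset.mem_product.1 (Finset.mem_filter.1 hp).1)
      exact Finset.mem_coe.2 (Finset.mem_product.2 ⟨hφM _ hp.1, hφM _ hp.2⟩)
    · have hv : ∀ e ∈ E, ∀ x, vl e x = (φ e).1 * x + (φ e).2 := fun e he =>
        (vl_of_on (hG.lt e he) (hφ1 e he) (hφ2 e he)).2
      have B1 : ∀ e ∈ E, ∀ f ∈ E, φ e = φ f → ∀ x0, e.1.1 < x0 → x0 < e.2.1 → f.1.1 < x0 →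
          x0 < f.2.1 → ¬ e.1.1 < f.1.1 ∧ ¬ e.2.1 < f.2.1 := by
        intro e he f hf hef x0 h1 h2 h3 h4
        constructor
        · intro h
          refine hG.free e he _ (hG.l f hf) h (by linarith) ?_
          rw [hv e he, hef]; exact hφ1 f hf
        · intro h
          refine hG.free f hf _ (hG.r e he) (by linarith) h ?_
          rw [hv f hf, ← hef]; exact hφ2 e he
      have B : ∀ e ∈ E, ∀ f ∈ E, φ e = φ f → ∀ x0, e.1.1 < x0 → x0 < e.2.1 → f.1.1 < x0 →
          x0 < f.2.1 → e = f := by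
        intro e he f hf hef x0 h1 h2 h3 h4
        have b1 := B1 e he f hf hef x0 h1 h2 h3 h4
        have b2 := B1 f hf e he hef.symm x0 h3 h4 h1 h2
        exact Prod.ext (hinj _ (hG.l e he) _ (hG.l f hf) (le_antisymm (not_lt.1 b2.1) (not_lt.1 b1.1)))
          (hinj _ (hG.r e he) _ (hG.r f hf) (le_antisymm (not_lt.1 b2.2) (not_lt.1 b1.2)))
      have Z : ∀ e ∈ E, ∀ f ∈ E, Cr e f → ∃ x0, e.1.1 < x0 ∧ x0 < e.2.1 ∧ f.1.1 < x0 ∧ x0 < f.2.1 ∧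
          (φ f).1 < (φ e).1 ∧ x0 * ((φ e).1 - (φ f).1) = (φ f).2 - (φ e).2 := by
        rintro e he f hf ⟨x1, x2, a1, a2, a3, a4, a5, a6, a7⟩
        rw [hv e he, hv f hf] at a6 a7
        have hs : (φ f).1 < (φ e).1 := by nlinarith
        have hpos := sub_pos.2 hs
        have hx1 : x1 < ((φ f).2 - (φ e).2) / ((φ e).1 - (φ f).1) := by
          rw [lt_div_iff₀ hpos]; nlinarith
        have hx2 : ((φ f).2 - (φ e).2) / ((φ e).1 - (φ f).1) < x2 := by
          rw [div_lt_iff₀ hpos]; nlinarith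
        exact ⟨((φ f).2 - (φ e).2) / ((φ e).1 - (φ f).1), by linarith, by linarith, by linarith,
          by linarith, hs, div_mul_cancel₀ _ hpos.ne'⟩
      rintro ⟨e, e'⟩ hp ⟨f, f'⟩ hp' h
      have hp := Finset.mem_filter.1 hp
      have hp' := Finset.mem_filter.1 hp'
      rw [Finset.mem_product] at hp hp'
      obtain ⟨⟨he, he'⟩, hc⟩ := hp
      obtain ⟨⟨hf, hf'⟩, hc'⟩ := hp'
      simp only [Prod.mk.injEq] at h he he' hf hf' hc hc' ⊢
      obtain ⟨x, a1, a2, a3, a4, a5, a6⟩ := Z e he e' he' hc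
      obtain ⟨x', b1, b2, b3, b4, b5, b6⟩ := Z f hf f' hf' hc'
      rw [← h.1, ← h.2] at b6
      have hxx : x = x' := mul_right_cancel₀ (sub_pos.2 a5).ne' (a6.trans b6.symm)
      subst x'
      exact ⟨B e he f hf h.1 x a1 a2 b1 b2, B e' he' f' hf' h.2 x a3 a4 b3 b4⟩
  have hEc : M.card * (k - 1) ≤ E.card := by
    let W : ℝ × ℝ → Finset (ℝ × ℝ) := fun l => V.filter (fun p => On l p)
    let N : ℝ × ℝ → Finset (ℝ × ℝ) := fun l => (W l).filter (fun u => ∃ w ∈ W l, u.1 < w.1)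
    have hN : ∀ l ∈ M, k - 1 ≤ (N l).card := by
      intro l hl
      have h1 := hM l hl
      have h2 : (N l).card + ((W l).filter (fun u => ¬ ∃ w ∈ W l, u.1 < w.1)).card = (W l).card :=
        Finset.card_filter_add_card_filter_not _
      have h3 : ((W l).filter (fun u => ¬ ∃ w ∈ W l, u.1 < w.1)).card ≤ 1 := by
        rw [Finset.card_le_one]
        intro u hu v hv
        rw [Finset.mem_filter] at hu hv
        have hu' := (Finset.mem_filter.1 hu.1).1
        have hv' := (Finset.mem_filter.1 hv.1).1
        push Not at hu hv
        exact hinj u hu' v hv' (le_antisymm (hv.2 u hu.1) (hu.2 v hv.1))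
      change k ≤ (W l).card at h1
      omega
    have h1 : M.card * (k - 1) ≤ (M.sigma N).card := by
      rw [Finset.card_sigma, ← smul_eq_mul]
      exact Finset.card_nsmul_le_sum _ _ _ hN
    refine h1.trans ?_
    have hn : ∀ p : (Σ _ : ℝ × ℝ, ℝ × ℝ), p ∈ M.sigma N → ∃ w ∈ V, On p.1 w ∧ p.2.1 < w.1 ∧
        ∀ v ∈ V, On p.1 v → p.2.1 < v.1 → w.1 ≤ v.1 := by
      rintro ⟨l, u⟩ hp
      obtain ⟨hl, hu⟩ := Finset.mem_sigma.1 hp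
      obtain ⟨hu1, w, hw, hlt⟩ := Finset.mem_filter.1 hu
      obtain ⟨w', hw', hmin⟩ := (V.filter (fun v => On l v ∧ u.1 < v.1)).exists_min_image Prod.fst
        ⟨w, Finset.mem_filter.2 ⟨(Finset.mem_filter.1 hw).1, (Finset.mem_filter.1 hw).2, hlt⟩⟩
      rw [Finset.mem_filter] at hw'
      exact ⟨w', hw'.1, hw'.2.1, hw'.2.2, fun v hv h1 h2 =>
        hmin v (Finset.mem_filter.2 ⟨hv, h1, h2⟩)⟩
    choose! ν n1 n2 n3 n4 using hn
    have hmem : ∀ p : (Σ _ : ℝ × ℝ, ℝ × ℝ), p ∈ M.sigma N → p.1 ∈ M ∧ p.2 ∈ V ∧ On p.1 p.2 := by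
      intro p hp
      obtain ⟨hl, hu⟩ := Finset.mem_sigma.1 hp
      have := Finset.mem_filter.1 (Finset.mem_filter.1 hu).1
      exact ⟨hl, this.1, this.2⟩
    refine Finset.card_le_card_of_injOn (fun p => (p.2, ν p)) ?_ ?_
    · intro p hp
      obtain ⟨m1, m2, m3⟩ := hmem p hp
      refine Finset.mem_coe.2 ((hEm _).2 ⟨⟨m2, n1 p hp⟩, n3 p hp, ⟨p.1, m1, m3, n2 p hp⟩, ?_⟩)
      intro v hv h1 h2 h3
      rw [(vl_of_on (e := (p.2, ν p)) (n3 p hp) m3 (n2 p hp)).2] at h3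
      have := n4 p hp v hv h3 h1
      exact absurd h2 (not_lt.2 this)
    · intro p hp p' hp' h
      simp only [Prod.mk.injEq] at h
      obtain ⟨m1, m2, m3⟩ := hmem p hp
      obtain ⟨m1', m2', m3'⟩ := hmem p' hp'
      have v1 := vl_of_on (e := (p.2, ν p)) (n3 p hp) m3 (n2 p hp)
      have v2 := vl_of_on (e := (p'.2, ν p')) (n3 p' hp') m3' (n2 p' hp')
      rw [h.1, h.2] at v1
      have e1 : p.1.1 = p'.1.1 := v1.1.symm.trans v2.1
      have e2 : p.1.2 = p'.1.2 := by
        have := (v1.2 0).symm.trans (v2.2 0)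
        simpa using this
      exact Sigma.ext (Prod.ext e1 e2) (heq_of_eq h.1)
  rw [Finset.card_product] at hX
  have := Nat.mul_le_mul_right (q ^ 2) hEc
  rw [pow_two M.card]
  omega

lemma st_arith (m j N : ℕ) (hj : 1 ≤ j)
    (h : ∀ q : ℕ, 1 ≤ q → m * j * q ^ 2 ≤ 3 * N * q ^ 3 + m ^ 2) :
    (m : ℝ) ≤ 288 * (N : ℝ) ^ 2 / (j : ℝ) ^ 3 + 6 * N / j := by
  have hj0 : (0 : ℝ) < j := by exact_mod_cast hj
  rcases Nat.eq_zero_or_pos m with rfl | hm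
  · simp; positivity
  have hm0 : (0 : ℝ) < m := by exact_mod_cast hm
  have hR : ∀ q : ℕ, 1 ≤ q → (m : ℝ) * j * q ^ 2 ≤ 3 * N * q ^ 3 + m ^ 2 := by
    intro q hq; exact_mod_cast h q hq
  by_cases hc : 2 * m < j
  · have h1 := hR 1 le_rfl
    have hc' : 2 * (m : ℝ) < j := by exact_mod_cast hc
    have : (m : ℝ) ≤ 6 * N / j := by
      rw [le_div_iff₀ hj0]
      norm_num at h1
      nlinarith
    have : 0 ≤ 288 * (N : ℝ) ^ 2 / (j : ℝ) ^ 3 := by positivity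
    linarith
  · have hc' : (j : ℝ) ≤ 2 * m := by exact_mod_cast not_lt.1 hc
    set s := Real.sqrt (2 * m / j) with hs
    have hs2 : s ^ 2 = 2 * m / j := Real.sq_sqrt (by positivity)
    have hs1 : 1 ≤ s := by
      rw [hs, Real.one_le_sqrt, le_div_iff₀ hj0]; linarith
    have hsj : s ^ 2 * j = 2 * m := by rw [hs2]; field_simp
    set q := ⌈s⌉₊ with hq
    have hq1 : s ≤ q := Nat.le_ceil s
    have hq2 : (q : ℝ) < s + 1 := Nat.ceil_lt_add_one (by linarith)
    have hq0 : 1 ≤ q := by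
      have : (1 : ℝ) ≤ q := hs1.trans hq1
      exact_mod_cast this
    have h1 := hR q hq0
    have hqq : s ^ 2 ≤ (q : ℝ) ^ 2 := by gcongr
    have h2 : 2 * (m : ℝ) ≤ j * q ^ 2 := by nlinarith
    have h3 : (m : ℝ) * j * q ^ 2 ≤ 6 * N * q * q ^ 2 := by nlinarith
    have hqp : (0 : ℝ) < (q : ℝ) ^ 2 := by
      have : (0 : ℝ) < q := by linarith
      positivity
    have h4 : (m : ℝ) * j ≤ 6 * N * q := le_of_mul_le_mul_right h3 hqp
    have h5 : (m : ℝ) * j ≤ 12 * N * s := by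
      have : (0 : ℝ) ≤ N := Nat.cast_nonneg N
      nlinarith
    have h6 : ((m : ℝ) * j) ^ 2 ≤ (12 * N * s) ^ 2 := by gcongr
    have h7 : ((m : ℝ) * j) ^ 2 * j ≤ 144 * N ^ 2 * (2 * m) := by
      calc ((m : ℝ) * j) ^ 2 * j ≤ (12 * N * s) ^ 2 * j := by gcongr
        _ = 144 * N ^ 2 * (s ^ 2 * j) := by ring
        _ = _ := by rw [hsj]
    have h8 : (m : ℝ) ≤ 288 * (N : ℝ) ^ 2 / (j : ℝ) ^ 3 := by
      rw [le_div_iff₀ (by positivity)]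
      have : (m : ℝ) * j ^ 3 * m ≤ 288 * N ^ 2 * m := by nlinarith
      exact le_of_mul_le_mul_right this hm0
    have : 0 ≤ 6 * (N : ℝ) / j := by positivity
    linarith
lemma mem_lineThrough {p q : ℝ × ℝ} (h : p ≠ q) (x : ℝ × ℝ) :
    x ∈ lineThrough p q ↔ (q.1 - p.1) * (x.2 - p.2) = (q.2 - p.2) * (x.1 - p.1) := by
  unfold lineThrough
  rw [SetLike.mem_coe, mem_affineSpan_pair_iff_exists_lineMap_eq]
  constructor
  · rintro ⟨r, rfl⟩
    simp [AffineMap.lineMap_apply]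
    ring
  · intro hx
    by_cases h1 : q.1 - p.1 = 0
    · have h2 : q.2 - p.2 ≠ 0 := fun h2 => h (Prod.ext (by linarith) (by linarith))
      have h3 : x.1 - p.1 = 0 := by
        rw [h1, zero_mul] at hx
        exact (mul_eq_zero.1 hx.symm).resolve_left h2
      refine ⟨(x.2 - p.2) / (q.2 - p.2), Prod.ext ?_ ?_⟩
      · simp [AffineMap.lineMap_apply, h1]; linarith
      · simp [AffineMap.lineMap_apply]; field_simp; ring
    · refine ⟨(x.1 - p.1) / (q.1 - p.1), Prod.ext ?_ ?_⟩
      · simp [AffineMap.lineMap_apply]; field_simp; ring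
      · simp [AffineMap.lineMap_apply]; field_simp; linarith

lemma IsLine.mem_iff {L : Set (ℝ × ℝ)} (hL : IsLine L) {p q : ℝ × ℝ} (h : p ≠ q) (hp : p ∈ L)
    (hq : q ∈ L) (x : ℝ × ℝ) :
    x ∈ L ↔ (q.1 - p.1) * (x.2 - p.2) = (q.2 - p.2) * (x.1 - p.1) := by
  obtain ⟨a, b, hab, rfl⟩ := hL
  rw [mem_lineThrough hab] at *
  have hab' : b.1 - a.1 ≠ 0 ∨ b.2 - a.2 ≠ 0 := by
    by_contra! hc
    exact hab (Prod.ext (by linarith) (by linarith))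
  have hpq' : q.1 - p.1 ≠ 0 ∨ q.2 - p.2 ≠ 0 := by
    by_contra! hc
    exact h (Prod.ext (by linarith) (by linarith))
  constructor
  · intro hx
    rcases hab' with h0 | h0
    · apply mul_left_cancel₀ h0
      linear_combination (q.1 - p.1) * hx - (x.1 - p.1) * hq + (x.1 - q.1) * hp
    · apply mul_left_cancel₀ h0
      linear_combination (q.2 - p.2) * hx - (x.2 - p.2) * hq + (x.2 - q.2) * hp
  · intro hx
    rcases hpq' with h0 | h0
    · apply mul_left_cancel₀ h0
      linear_combination (b.1 - a.1) * hx + (x.1 - p.1) * hq + (q.1 - x.1) * hp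
    · apply mul_left_cancel₀ h0
      linear_combination (b.2 - a.2) * hx + (x.2 - p.2) * hq + (q.2 - x.2) * hp

lemma IsLine.ext {L L' : Set (ℝ × ℝ)} (hL : IsLine L) (hL' : IsLine L') {p q : ℝ × ℝ} (h : p ≠ q)
    (hp : p ∈ L) (hq : q ∈ L) (hp' : p ∈ L') (hq' : q ∈ L') : L = L' := by
  ext x
  rw [hL.mem_iff h hp hq, hL'.mem_iff h hp' hq']

lemma left_mem (p q : ℝ × ℝ) : p ∈ lineThrough p q := left_mem_affineSpan_pair ℝ p q
lemma right_mem (p q : ℝ × ℝ) : q ∈ lineThrough p q := right_mem_affineSpan_pair ℝ p q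

open Classical in
lemma richness_eq (S : Finset (ℝ × ℝ)) (L : Set (ℝ × ℝ)) :
    richness S L = (S.filter (fun p => p ∈ L)).card := by
  unfold richness
  rw [← Set.ncard_coe_finset]
  congr 1
  ext; simp

open Classical in
lemma exists_shear (S : Finset (ℝ × ℝ)) : ∃ t : ℝ, ∀ p ∈ S, ∀ q ∈ S,
    p.1 + t * p.2 = q.1 + t * q.2 → p = q := by
  obtain ⟨t, ht⟩ := Infinite.exists_notMem_finset
    ((S ×ˢ S).image (fun e => (e.2.1 - e.1.1) / (e.1.2 - e.2.2)))
  refine ⟨t, fun p hp q hq h => ?_⟩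
  by_cases h2 : p.2 = q.2
  · rw [h2] at h
    exact Prod.ext (by linarith) h2
  · exfalso
    apply ht
    refine Finset.mem_image.2 ⟨(p, q), Finset.mem_product.2 ⟨hp, hq⟩, ?_⟩
    have : p.2 - q.2 ≠ 0 := sub_ne_zero.2 h2
    simp only
    rw [div_eq_iff this]
    linarith

open Classical in
lemma rich_bound (S : Finset (ℝ × ℝ)) (M : Finset (Set (ℝ × ℝ))) (j : ℕ) (hj : 1 ≤ j)
    (hM : ∀ L ∈ M, IsLine L ∧ j + 1 ≤ richness S L) :
    (M.card : ℝ) ≤ 288 * (S.card : ℝ) ^ 2 / (j : ℝ) ^ 3 + 6 * S.card / j := by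
  obtain ⟨t, ht⟩ := exists_shear S
  let σ : ℝ × ℝ → ℝ × ℝ := fun p => (p.1 + t * p.2, p.2)
  have hσ : Function.Injective σ := by
    intro p q h
    simp only [σ, Prod.mk.injEq] at h
    obtain ⟨h1, h2⟩ := h
    rw [h2] at h1
    exact Prod.ext (by linarith) h2
  have hl : ∀ L, L ∈ M → ∃ l : ℝ × ℝ, ∀ p, p ∈ L ↔ On l (σ p) := by
    intro L hL
    obtain ⟨hLl, hr⟩ := hM L hL
    rw [richness_eq] at hr
    obtain ⟨p, hp, q, hq, hpq⟩ := Finset.one_lt_card.1 (lt_of_lt_of_le (by omega : 1 < j + 1) hr)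
    rw [Finset.mem_filter] at hp hq
    have hD : (q.1 - p.1) + t * (q.2 - p.2) ≠ 0 := by
      intro h
      exact hpq (ht p hp.1 q hq.1 (by linarith))
    obtain ⟨s, hs⟩ : ∃ s, s * ((q.1 - p.1) + t * (q.2 - p.2)) = q.2 - p.2 :=
      ⟨_, div_mul_cancel₀ _ hD⟩
    refine ⟨(s, p.2 - s * (p.1 + t * p.2)), fun x => ?_⟩
    rw [hLl.mem_iff hpq hp.2 hq.2]
    unfold On
    simp only [σ]
    constructor
    · intro h
      apply mul_left_cancel₀ hD
      linear_combination h - (x.1 + t * x.2 - p.1 - t * p.2) * hs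
    · intro h
      linear_combination ((q.1 - p.1) + t * (q.2 - p.2)) * h + (x.1 + t * x.2 - p.1 - t * p.2) * hs
  choose! l hl using hl
  have hlinj : Set.InjOn l M := by
    intro L hL L' hL' h
    ext x
    rw [hl L hL, hl L' hL', h]
  have hc : (M.image l).card = M.card := Finset.card_image_of_injOn hlinj
  have hS : (S.image σ).card = S.card := Finset.card_image_of_injective _ hσ
  have key := st_arith (M.image l).card j (S.image σ).card hj (by
    intro q hq
    refine szekely (S.image σ) (M.image l) (j + 1) q hq ?_ ?_
    · intro u hu v hv h
      obtain ⟨p, hp, rfl⟩ := Finset.mem_image.1 hu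
      obtain ⟨p', hp', rfl⟩ := Finset.mem_image.1 hv
      rw [ht p hp p' hp' h]
    · intro m hm
      obtain ⟨L, hL, rfl⟩ := Finset.mem_image.1 hm
      have := (hM L hL).2
      rw [richness_eq] at this
      refine this.trans (Finset.card_le_card_of_injOn σ ?_ hσ.injOn)
      intro p hp
      have hp := Finset.mem_filter.1 hp
      exact Finset.mem_coe.2 (Finset.mem_filter.2 ⟨Finset.mem_image_of_mem _ hp.1, (hl L hL p).1 hp.2⟩))
  rw [hc, hS] at key
  exact key
lemma bichrom_finite (P Q : Finset (ℝ × ℝ)) (hd : Disjoint P Q) : (BichromLines P Q).Finite := by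
  classical
  refine (((P ×ˢ Q).image (fun e => lineThrough e.1 e.2)).finite_toSet).subset ?_
  rintro L ⟨hL, ⟨p, hp, hpL⟩, ⟨q, hq, hqL⟩⟩
  have hpq : p ≠ q := fun h => Finset.disjoint_left.1 hd hp (h ▸ hq)
  refine Finset.mem_coe.2 (Finset.mem_image.2 ⟨(p, q), Finset.mem_product.2 ⟨hp, hq⟩, ?_⟩)
  exact (IsLine.ext hL ⟨p, q, hpq, rfl⟩ hpq hpL hqL (left_mem p q) (right_mem p q)).symm

lemma layer (κ D R : ℕ) (hR : R ≤ D) :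
    R ^ 2 ≤ (κ + 1) ^ 2 + ∑ j ∈ Finset.Ioo κ D, if j + 1 ≤ R then 2 * (j + 1) else 0 := by
  have h1 : ∀ R, κ + 1 ≤ R → R ^ 2 ≤ (κ + 1) ^ 2 + ∑ j ∈ Finset.Ico (κ + 1) R, 2 * (j + 1) := by
    intro R hR
    induction R, hR using Nat.le_induction with
    | base => simp
    | succ m hm ih =>
      rw [Finset.sum_Ico_succ_top hm]
      nlinarith
  rcases le_total R (κ + 1) with h | h
  · have : R ^ 2 ≤ (κ + 1) ^ 2 := Nat.pow_le_pow_left h 2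
    omega
  · refine (h1 R h).trans ?_
    gcongr
    rw [← Finset.sum_filter]
    apply Finset.sum_le_sum_of_subset
    intro j hj
    rw [Finset.mem_Ico] at hj
    rw [Finset.mem_filter, Finset.mem_Ioo]
    omega

open Classical in
lemma pairs_le (P Q : Finset (ℝ × ℝ)) (hd : Disjoint P Q) :
    P.card * Q.card ≤ ∑ L ∈ (bichrom_finite P Q hd).toFinset, richness (P ∪ Q) L ^ 2 := by
  have hne : ∀ p ∈ P, ∀ q ∈ Q, p ≠ q := fun p hp q hq h => Finset.disjoint_left.1 hd hp (h ▸ hq)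
  rw [← Finset.card_product]
  rw [Finset.card_eq_sum_card_fiberwise (f := fun e => lineThrough e.1 e.2)
    (t := (bichrom_finite P Q hd).toFinset)]
  · apply Finset.sum_le_sum
    intro L _
    rw [richness_eq, pow_two, ← Finset.card_product]
    apply Finset.card_le_card
    rintro ⟨p, q⟩ h
    simp only [Finset.mem_filter, Finset.mem_product, Finset.mem_union] at h ⊢
    obtain ⟨⟨hp, hq⟩, rfl⟩ := h
    exact ⟨⟨Or.inl hp, left_mem p q⟩, ⟨Or.inr hq, right_mem p q⟩⟩
  · rintro ⟨p, q⟩ h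
    have h := Finset.mem_product.1 h
    simp only [Set.Finite.coe_toFinset]
    exact ⟨⟨p, q, hne p h.1 q h.2, rfl⟩, ⟨p, h.1, left_mem p q⟩, ⟨q, h.2, right_mem p q⟩⟩

lemma regime_a (P Q : Finset (ℝ × ℝ)) (hd : Disjoint P Q) (n : ℕ) (hP : P.card = n)
    (hQ : Q.card = n) (hr : ∀ L, IsLine L → 192 * richness (P ∪ Q) L ≤ n) :
    (n : ℝ) ^ 2 ≤ 2 * 36864 ^ 2 * ((BichromLines P Q).ncard : ℝ) := by
  classical
  obtain ⟨κ, hκ⟩ : ∃ κ : ℕ, (κ : ℝ) + 1 = 36864 := ⟨36863, by norm_num⟩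
  have hp := pairs_le P Q hd
  rw [hP, hQ] at hp
  set B := (bichrom_finite P Q hd).toFinset with hB
  have hBc : (BichromLines P Q).ncard = B.card := Set.ncard_eq_toFinset_card _ _
  have hBl : ∀ L ∈ B, IsLine L := by
    intro L hL
    exact ((Set.Finite.mem_toFinset _).1 hL).1
  set D := n / 192 with hD
  have hS : ((P ∪ Q).card : ℝ) = 2 * n := by
    rw [Finset.card_union_of_disjoint hd, hP, hQ]; push_cast; ring
  have h1 : n * n ≤ B.card * (κ + 1) ^ 2 + ∑ j ∈ Finset.Ioo κ D,
      (B.filter (fun L => j + 1 ≤ richness (P ∪ Q) L)).card * (2 * (j + 1)) := by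
    refine hp.trans ((Finset.sum_le_sum (fun L hL => layer κ D _ ?_)).trans ?_)
    · have := hr L (hBl L hL)
      omega
    · rw [Finset.sum_add_distrib, Finset.sum_comm]
      apply Nat.add_le_add
      · rw [Finset.sum_const, smul_eq_mul]
      · apply Finset.sum_le_sum
        intro j _
        rw [← Finset.sum_filter, Finset.sum_const, smul_eq_mul]
  have h2 : (n : ℝ) * n ≤ B.card * ((κ : ℝ) + 1) ^ 2 + ∑ j ∈ Finset.Ioo κ D,
      ((B.filter (fun L => j + 1 ≤ richness (P ∪ Q) L)).card : ℝ) * (2 * (j + 1)) := by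
    exact_mod_cast h1
  have h3 : ∑ j ∈ Finset.Ioo κ D,
      ((B.filter (fun L => j + 1 ≤ richness (P ∪ Q) L)).card : ℝ) * (2 * (j + 1)) ≤
      ∑ j ∈ Finset.Ioo κ D, (4608 * (n : ℝ) ^ 2 * ((j : ℝ) ^ 2)⁻¹ + 48 * n) := by
    apply Finset.sum_le_sum
    intro j hj
    rw [Finset.mem_Ioo] at hj
    have hj1 : 1 ≤ j := by omega
    have hb := rich_bound (P ∪ Q) (B.filter (fun L => j + 1 ≤ richness (P ∪ Q) L)) j hj1 (by
      intro L hL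
      rw [Finset.mem_filter] at hL
      exact ⟨hBl L hL.1, hL.2⟩)
    rw [hS] at hb
    have hj0 : (1 : ℝ) ≤ j := by exact_mod_cast hj1
    have hj00 : (0 : ℝ) < j := by linarith
    calc _ ≤ (288 * (2 * (n : ℝ)) ^ 2 / (j : ℝ) ^ 3 + 6 * (2 * n) / j) * (4 * j) := by
          apply mul_le_mul hb (by linarith) (by positivity) (by positivity)
      _ = _ := by field_simp; ring
  have h4 : ∑ j ∈ Finset.Ioo κ D, ((j : ℝ) ^ 2)⁻¹ ≤ 2 / ((κ : ℝ) + 1) := by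
    have := sum_Ioo_inv_sq_le (α := ℝ) κ D
    exact this
  rw [Finset.sum_add_distrib, ← Finset.mul_sum, Finset.sum_const, nsmul_eq_mul] at h3
  have h5 : ((Finset.Ioo κ D).card : ℝ) * 192 ≤ n := by
    have : (Finset.Ioo κ D).card * 192 ≤ n := by rw [Nat.card_Ioo]; omega
    exact_mod_cast this
  have h6 : 4608 * (n : ℝ) ^ 2 * ∑ j ∈ Finset.Ioo κ D, ((j : ℝ) ^ 2)⁻¹ ≤
      4608 * (n : ℝ) ^ 2 * (2 / ((κ : ℝ) + 1)) := by gcongr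
  have h7 : ((Finset.Ioo κ D).card : ℝ) * (48 * n) ≤ n * n / 4 := by
    have : (0 : ℝ) ≤ n := Nat.cast_nonneg n
    nlinarith
  rw [hBc]
  rw [hκ] at h2 h6
  have h8 := h2.trans (add_le_add_right h3 _)
  norm_num at h8 h6 ⊢
  nlinarith

open Classical in
lemma fan (L0 : Set (ℝ × ℝ)) (hL0 : IsLine L0) (A D : Finset (ℝ × ℝ)) (hA : ∀ x ∈ A, x ∈ L0)
    (hD : ∀ y ∈ D, y ∉ L0) :
    2 * (A.card * D.card) ≤ 2 * ((A ×ˢ D).image (fun e => lineThrough e.1 e.2)).card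
      + D.card ^ 2 := by
  have huniq : ∀ L, IsLine L → ∀ y ∈ L, y ∉ L0 → ∀ x ∈ L, x ∈ L0 → ∀ x' ∈ L, x' ∈ L0 → x = x' := by
    intro L hL y hy hy0 x hx hx0 x' hx' hx0'
    by_contra hne
    exact hy0 (IsLine.ext hL hL0 hne hx hx' hx0 hx0' ▸ hy)
  have hlin : ∀ x ∈ L0, ∀ y, y ∉ L0 → IsLine (lineThrough x y) := by
    intro x hx y hy
    exact ⟨x, y, fun h => hy (h ▸ hx), rfl⟩
  induction D using Finset.induction_on with
  | empty => simp
  | insert y D hyD ih =>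
    have ih := ih (fun z hz => hD z (Finset.mem_insert_of_mem hz))
    have hy := hD y (Finset.mem_insert_self _ _)
    have hDz : ∀ z ∈ D, z ∉ L0 := fun z hz => hD z (Finset.mem_insert_of_mem hz)
    set F := (A ×ˢ D).image (fun e => lineThrough e.1 e.2) with hF
    set A1 := A.filter (fun x => lineThrough x y ∉ F) with hA1
    set A2 := A.filter (fun x => ¬ lineThrough x y ∉ F) with hA2
    have hsum : A1.card + A2.card = A.card := Finset.card_filter_add_card_filter_not _
    have hinj : Set.InjOn (fun x => lineThrough x y) A := by
      intro x hx x' hx' h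
      have hx := hA x hx
      have hx' := hA x' hx'
      refine huniq _ (hlin x hx y hy) y (right_mem _ _) hy x (left_mem _ _) hx x' ?_ hx'
      have h : lineThrough x y = lineThrough x' y := h
      rw [h]; exact left_mem _ _
    have hA2c : A2.card ≤ D.card := by
      have hz : ∀ x, x ∈ A2 → ∃ z ∈ D, z ∈ lineThrough x y := by
        intro x hx
        rw [hA2, Finset.mem_filter, not_not, hF, Finset.mem_image] at hx
        obtain ⟨hx, ⟨x', z⟩, h1, h2⟩ := hx
        rw [Finset.mem_product] at h1
        exact ⟨z, h1.2, h2 ▸ right_mem _ _⟩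
      choose! z hzD hz using hz
      refine Finset.card_le_card_of_injOn z hzD ?_
      intro x hx x' hx' h
      have hxA := (Finset.mem_filter.1 hx).1
      have hxA' := (Finset.mem_filter.1 hx').1
      apply hinj hxA hxA'
      have hne : y ≠ z x := fun h => hyD (h ▸ hzD x hx)
      exact IsLine.ext (hlin x (hA x hxA) y hy) (hlin x' (hA x' hxA') y hy) hne (right_mem _ _)
        (hz x hx) (right_mem _ _) (h ▸ hz x' hx')
    have hsub : F ∪ A1.image (fun x => lineThrough x y) ⊆
        (A ×ˢ insert y D).image (fun e => lineThrough e.1 e.2) := by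
      intro L hL
      rcases Finset.mem_union.1 hL with hL | hL
      · rw [hF, Finset.mem_image] at hL
        obtain ⟨e, he, rfl⟩ := hL
        rw [Finset.mem_product] at he
        exact Finset.mem_image.2 ⟨e, Finset.mem_product.2 ⟨he.1, Finset.mem_insert_of_mem he.2⟩, rfl⟩
      · obtain ⟨x, hx, rfl⟩ := Finset.mem_image.1 hL
        exact Finset.mem_image.2 ⟨(x, y), Finset.mem_product.2
          ⟨(Finset.mem_filter.1 hx).1, Finset.mem_insert_self _ _⟩, rfl⟩
    have hc := Finset.card_le_card hsub
    have himg : (A1.image (fun x => lineThrough x y)).card = A1.card :=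
      Finset.card_image_of_injOn (hinj.mono (fun x hx => (Finset.mem_filter.1 hx).1))
    rw [Finset.card_union_of_disjoint, himg] at hc
    · rw [Finset.card_insert_of_notMem hyD]
      nlinarith
    · rw [Finset.disjoint_right]
      intro L hL
      obtain ⟨x, hx, rfl⟩ := Finset.mem_image.1 hL
      exact (Finset.mem_filter.1 hx).2

open Classical in
lemma fan2 (P Q : Finset (ℝ × ℝ)) (hd : Disjoint P Q) (L0 : Set (ℝ × ℝ)) (hL0 : IsLine L0) :
    (P.filter (fun p => p ∈ L0)).card *
      min (P.filter (fun p => p ∈ L0)).card (Q.filter (fun p => p ∉ L0)).card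
      ≤ 2 * (BichromLines P Q).ncard := by
  set A := P.filter (fun p => p ∈ L0)
  set D := Q.filter (fun p => p ∉ L0)
  obtain ⟨D', hD', hc⟩ := Finset.exists_subset_card_eq (min_le_right A.card D.card)
  have h1 := fan L0 hL0 A D' (fun x hx => (Finset.mem_filter.1 hx).2)
    (fun y hy => (Finset.mem_filter.1 (hD' hy)).2)
  have h2 : ((A ×ˢ D').image (fun e => lineThrough e.1 e.2)).card ≤ (BichromLines P Q).ncard := by
    rw [← Set.ncard_coe_finset]
    refine Set.ncard_le_ncard ?_ (bichrom_finite P Q hd)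
    intro L hL
    obtain ⟨⟨x, y⟩, he, rfl⟩ := Finset.mem_image.1 (Finset.mem_coe.1 hL)
    rw [Finset.mem_product] at he
    have hx := Finset.mem_filter.1 he.1
    have hy := Finset.mem_filter.1 (hD' he.2)
    exact ⟨⟨x, y, fun h => hy.2 (by have := hx.2; simp only at h this ⊢; rw [← h]; exact this), rfl⟩,
      ⟨x, hx.1, left_mem _ _⟩, ⟨y, hy.1, right_mem _ _⟩⟩
  have h3 : D'.card ≤ A.card := hc ▸ min_le_left _ _
  rw [← hc]
  nlinarith

lemma bichrom_comm (P Q : Finset (ℝ × ℝ)) : BichromLines P Q = BichromLines Q P := by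
  ext L
  simp only [BichromLines, Set.mem_ofPred_eq]
  tauto

lemma regime_b_arith (n a b B : ℕ) (ha : a ≤ n) (hab : b ≤ a) (hn : n < 192 * (a + b))
    (h : a * min a (n - b) ≤ 2 * B) :
    (1 / 10 ^ 10 : ℝ) * n * (2 * n - (a + b)) ≤ B := by
  have hb : b ≤ n := hab.trans ha
  obtain ⟨c, rfl⟩ := Nat.exists_eq_add_of_le hb
  rw [Nat.add_sub_cancel_left] at h
  have hR : (a : ℝ) * min (a : ℝ) c ≤ 2 * B := by exact_mod_cast h
  have hn' : ((b : ℝ) + c) < 192 * (a + b) := by exact_mod_cast hn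
  have hab' : (b : ℝ) ≤ a := by exact_mod_cast hab
  have ha' : (a : ℝ) ≤ b + c := by exact_mod_cast ha
  have hb0 : (0 : ℝ) ≤ b := Nat.cast_nonneg b
  have hc0 : (0 : ℝ) ≤ c := Nat.cast_nonneg c
  push_cast
  have h1 : (b : ℝ) + c ≤ 384 * a := by linarith
  have h2 : 2 * ((b : ℝ) + c) - (a + b) ≤ 768 * min (a : ℝ) c := by
    rw [← div_le_iff₀' (by norm_num), le_min_iff]
    constructor <;> linarith
  have h3 : (0 : ℝ) ≤ 2 * ((b : ℝ) + c) - (a + b) := by linarith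
  have h4 : ((b : ℝ) + c) * (2 * ((b : ℝ) + c) - (a + b)) ≤ (384 * a) * (768 * min (a : ℝ) c) :=
    mul_le_mul h1 h2 h3 (by positivity)
  have h5 : (0 : ℝ) ≤ B := Nat.cast_nonneg B
  norm_num
  nlinarith

/-- Beck-type theorem for bichromatic point sets: if every line contains at most
`r` points of `P ∪ Q` with `|P| = |Q| = n`, then there are at least
`C · n · (2n − r)` bichromatic induced lines. -/
theorem bichromatic_beck :
    ∃ C : ℝ, 0 < C ∧ ∀ (P Q : Finset (ℝ × ℝ)) (n r : ℕ),
      Disjoint P Q → P.card = n → Q.card = n →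
      (∀ L : Set (ℝ × ℝ), IsLine L → richness (P ∪ Q) L ≤ r) →
      C * (n : ℝ) * (2 * (n : ℝ) - (r : ℝ)) ≤ ((BichromLines P Q).ncard : ℝ) := by
  classical
  refine ⟨1 / 10 ^ 10, by norm_num, ?_⟩
  intro P Q n r hd hP hQ hr
  by_cases hc : ∀ L, IsLine L → 192 * richness (P ∪ Q) L ≤ n
  · have h := regime_a P Q hd n hP hQ hc
    have hn : (0 : ℝ) ≤ n := Nat.cast_nonneg n
    have hr0 : (0 : ℝ) ≤ r := Nat.cast_nonneg r
    have := mul_nonneg hn hr0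
    norm_num at h ⊢
    nlinarith
  · push Not at hc
    obtain ⟨L0, hL0, hrich⟩ := hc
    have hrr := hr L0 hL0
    have h1 := fan2 P Q hd L0 hL0
    have h2 := fan2 Q P hd.symm L0 hL0
    rw [bichrom_comm Q P] at h2
    have e1 : (P.filter (fun p => p ∈ L0)).card + (P.filter (fun p => p ∉ L0)).card = P.card :=
      Finset.card_filter_add_card_filter_not _
    have e2 : (Q.filter (fun p => p ∈ L0)).card + (Q.filter (fun p => p ∉ L0)).card = Q.card :=
      Finset.card_filter_add_card_filter_not _
    have e3 : richness (P ∪ Q) L0 =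
        (P.filter (fun p => p ∈ L0)).card + (Q.filter (fun p => p ∈ L0)).card := by
      rw [richness_eq, Finset.filter_union, Finset.card_union_of_disjoint]
      exact Finset.disjoint_filter_filter hd
    generalize (P.filter (fun p => p ∈ L0)).card = a at *
    generalize (Q.filter (fun p => p ∈ L0)).card = b at *
    have hab : (a : ℝ) + b ≤ r := by exact_mod_cast e3 ▸ hrr
    have hgoal : (1 / 10 ^ 10 : ℝ) * n * (2 * n - (a + b)) ≤ (BichromLines P Q).ncard := by
      rcases le_total b a with h | h
      · apply regime_b_arith n a b _ (by omega) h (by omega)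
        rwa [show n - b = (Q.filter (fun p => p ∉ L0)).card by omega]
      · have := regime_b_arith n b a (BichromLines P Q).ncard (by omega) h (by omega)
          (by rwa [show n - a = (P.filter (fun p => p ∉ L0)).card by omega])
        rwa [add_comm (b : ℝ)] at this
    refine le_trans ?_ hgoal
    gcongr
end
end

section
/- Beck's Induced Lines Theorem: There is an absolute constant C > 0 with the following property. Let S be a set of n points in the Euclidean plane ℝ², and let r be the maximum, over all lines ℓ induced by S, of the number of points of S incident on ℓ. Then the number of lines induced by S is at least C · r · (n − r). -/
open Set

noncomputable section

theorem Bk.affine_root {m b m' b' x y : ℝ} (hxy : x < y) (h1 : m * x + b < m' * x + b')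
    (h2 : m' * y + b' < m * y + b) : ∃ z, x < z ∧ z < y ∧ m * z + b = m' * z + b' := by
  have hm : 0 < m - m' := by nlinarith
  refine ⟨(b' - b) / (m - m'), ?_, ?_, ?_⟩
  · rw [lt_div_iff₀ hm]; nlinarith
  · rw [div_lt_iff₀ hm]; nlinarith
  · field_simp; ring

theorem Bk.planar {ι : Type} [DecidableEq ι] (V : Finset ℝ) (h : ℝ → ℝ) (E : Finset ι) (l r m b : ι → ℝ)
    (hl : ∀ i ∈ E, l i ∈ V) (hr : ∀ i ∈ E, r i ∈ V) (hlr : ∀ i ∈ E, l i < r i)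
    (hl2 : ∀ i ∈ E, h (l i) = m i * l i + b i) (hr2 : ∀ i ∈ E, h (r i) = m i * r i + b i)
    (hv : ∀ i ∈ E, ∀ p ∈ V, l i < p → p < r i → h p ≠ m i * p + b i)
    (hc : ∀ i ∈ E, ∀ j ∈ E, i ≠ j → ∀ x, l i < x → x < r i → l j < x → x < r j →
      m i * x + b i ≠ m j * x + b j) : E.card ≤ 3 * V.card := by
  classical
  -- no crossings, in two sided form
  have cross : ∀ i ∈ E, ∀ j ∈ E, ∀ x y, x < y → l i ≤ x → l j ≤ x → y ≤ r i → y ≤ r j →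
      m i * x + b i < m j * x + b j → m j * y + b j < m i * y + b i → False := by
    intro i hi j hj x y hxy h1 h2 h3 h4 h5 h6
    obtain ⟨z, hz1, hz2, hz3⟩ := Bk.affine_root hxy h5 h6
    have hij : i ≠ j := by rintro rfl; linarith
    exact hc i hi j hj hij z (by linarith) (by linarith) (by linarith) (by linarith) hz3
  have same : ∀ i ∈ E, ∀ j ∈ E, l i = l j → m i = m j → i = j := by
    intro i hi j hj h1 h2
    by_contra hij
    have e1 := hl2 i hi
    have e2 := hl2 j hj
    have e3 := hlr i hi
    have e4 := hlr j hj
    have hb : b i = b j := by rw [h1, h2] at e1; linarith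
    obtain ⟨x, hx1, hx2⟩ := exists_between (lt_min e3 (h1 ▸ e4))
    have := lt_min_iff.1 hx2
    exact hc i hi j hj hij x hx1 this.1 (by linarith) this.2 (by rw [h2, hb])
  let T : Finset ι := E.filter fun i => ∀ j ∈ E, l j = l i → m j ≤ m i
  let D : ι → ℝ → Prop := fun i y => l i < y ∧ y < r i ∧ m i * y + b i < h y ∧
    ∀ f ∈ E, l f < y → y < r f → m f * y + b f < h y → m f * y + b f ≤ m i * y + b i
  let U : ι → ℝ → Prop := fun i y => l i < y ∧ y < r i ∧ h y < m i * y + b i ∧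
    ∀ f ∈ E, l f < y → y < r f → h y < m f * y + b f → m i * y + b i ≤ m f * y + b f
  let A : Finset ι := E.filter fun i => ∃ y ∈ V, D i y
  let B : Finset ι := E.filter fun i => ∃ g ∈ E, l g = l i ∧ U g (r i)
  have hT : T.card ≤ V.card := by
    apply Finset.card_le_card_of_injOn l
    · intro i hi
      exact hl i (Finset.mem_filter.1 hi).1
    · intro i hi j hj hij
      have hi := Finset.mem_filter.1 hi
      have hj := Finset.mem_filter.1 hj
      exact same i hi.1 j hj.1 hij (le_antisymm (hj.2 i hi.1 hij) (hi.2 j hj.1 hij.symm))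
  have hA : A.card ≤ V.card := by
    apply Finset.card_le_card_of_forall_subsingleton D
    · intro i hi; exact (Finset.mem_filter.1 hi).2
    · rintro y hy i ⟨hi, hiD⟩ j ⟨hj, hjD⟩
      have hi := (Finset.mem_filter.1 hi).1
      have hj := (Finset.mem_filter.1 hj).1
      by_contra hij
      obtain ⟨a1, a2, a3, a4⟩ := hiD
      obtain ⟨b1, b2, b3, b4⟩ := hjD
      exact hc i hi j hj hij y a1 a2 b1 b2 (le_antisymm (b4 i hi a1 a2 a3) (a4 j hj b1 b2 b3))
  have hB : B.card ≤ V.card := by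
    apply Finset.card_le_card_of_injOn r
    · intro i hi
      exact hr i (Finset.mem_filter.1 hi).1
    · intro i hi j hj hij
      obtain ⟨hi, g, hg, hgl, a1, a2, a3, a4⟩ := Finset.mem_filter.1 hi
      obtain ⟨hj, g', hg', hgl', b1, b2, b3, b4⟩ := Finset.mem_filter.1 hj
      have hgg : g = g' := by
        by_contra hne
        rw [hij] at a1 a2 a3 a4
        exact hc g hg g' hg' hne _ a1 a2 b1 b2 (le_antisymm (a4 g' hg' b1 b2 b3) (b4 g hg a1 a2 a3))
      have hll : l i = l j := by rw [← hgl, ← hgl', hgg]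
      refine same i hi j hj hll ?_
      have e1 := hl2 i hi
      have e2 := hl2 j hj
      have e3 := hr2 i hi
      have e4 := hr2 j hj
      have e5 := hlr j hj
      rw [hll] at e1
      rw [hij] at e3
      have : (m i - m j) * (r j - l j) = 0 := by linarith
      rcases mul_eq_zero.1 this with h | h <;> linarith
  have key : E ⊆ T ∪ A ∪ B := by
    intro i hi
    by_cases hiT : i ∈ T
    · simp [hiT]
    have hN : (E.filter fun j => l j = l i ∧ m i < m j).Nonempty := by
      have : ¬ ∀ j ∈ E, l j = l i → m j ≤ m i := fun hh => hiT (Finset.mem_filter.2 ⟨hi, hh⟩)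
      push Not at this
      obtain ⟨j, h1, h2, h3⟩ := this
      exact ⟨j, Finset.mem_filter.2 ⟨h1, h2, h3⟩⟩
    obtain ⟨g, hg, hgmin⟩ := Finset.exists_min_image _ m hN
    obtain ⟨hgE, hgl, hgm⟩ := Finset.mem_filter.1 hg
    have hgmin' : ∀ f ∈ E, l f = l i → m i < m f → m g ≤ m f := fun f h1 h2 h3 =>
      hgmin f (Finset.mem_filter.2 ⟨h1, h2, h3⟩)
    have ei := hl2 i hi
    have eg := hl2 g hgE
    rw [hgl] at eg
    have ri := hr2 i hi
    have rg := hr2 g hgE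
    have li := hlr i hi
    have lg := hlr g hgE
    have below : ∀ x, l i < x → m i * x + b i < m g * x + b g := by
      intro x hx; nlinarith
    let R := V.filter fun x => l i < x ∧ x ≤ r i ∧ x ≤ r g ∧ m i * x + b i ≤ h x ∧ h x ≤ m g * x + b g
    have hR : R.Nonempty := by
      rcases le_total (r i) (r g) with hh | hh
      · exact ⟨r i, Finset.mem_filter.2 ⟨hr i hi, li, le_rfl, hh, ri.ge, by
          have := below _ li; linarith⟩⟩
      · exact ⟨r g, Finset.mem_filter.2 ⟨hr g hgE, by linarith, hh, le_rfl, by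
          have := below (r g) (by linarith); linarith, rg.le⟩⟩
    obtain ⟨y, hy, hymin⟩ := Finset.exists_min_image R id hR
    obtain ⟨hyV, hy1, hy2, hy3, hy4, hy5⟩ := Finset.mem_filter.1 hy
    have claim : ∀ f ∈ E, l f < y → y < r f → m i * y + b i < m f * y + b f →
        m f * y + b f < m g * y + b g → False := by
      intro f hf h1 h2 h3 h4
      have ef := hl2 f hf
      rcases lt_trichotomy (l f) (l i) with hh | hh | hh
      · have hne := hv f hf (l i) (hl i hi) hh (by linarith)
        rcases lt_or_gt_of_ne hne with h5 | h5
        · exact cross g hgE f hf (l i) y hy1 hgl.le hh.le hy3 h2.le (by linarith) h4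
        · exact cross f hf i hi (l i) y hy1 hh.le le_rfl h2.le hy2 (by linarith) h3
      · have h5 : m i < m f := by rw [hh] at ef; nlinarith
        have h6 := hgmin' f hf hh h5
        rw [hh] at ef
        nlinarith
      · have : l f ∈ R := by
          refine Finset.mem_filter.2 ⟨hl f hf, hh, by linarith, by linarith, ?_, ?_⟩
          · by_contra h7
            exact cross f hf i hi (l f) y h1 le_rfl hh.le h2.le hy2 (by linarith) h3
          · by_contra h7
            exact cross g hgE f hf (l f) y h1 (by linarith) le_rfl hy3 h2.le (by linarith) h4
        have := hymin _ this
        simp only [id] at this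
        linarith
    rcases hy4.lt_or_eq with h5 | h5
    · have h6 : y < r i := lt_of_le_of_ne hy2 (by rintro rfl; linarith)
      have : i ∈ A := Finset.mem_filter.2 ⟨hi, y, hyV, hy1, h6, h5, by
        intro f hf f1 f2 f3
        by_contra f4
        exact claim f hf f1 f2 (by linarith) (by linarith)⟩
      simp [this]
    · have h6 : y = r i := by
        by_contra h7
        exact hv i hi y hyV hy1 (lt_of_le_of_ne hy2 h7) h5.symm
      have h7 := below y hy1
      have h8 : y < r g := lt_of_le_of_ne hy3 (by rintro rfl; linarith)
      have : i ∈ B := Finset.mem_filter.2 ⟨hi, g, hgE, hgl, by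
        rw [← h6]
        refine ⟨by linarith, h8, by linarith, ?_⟩
        intro f hf f1 f2 f3
        by_contra f4
        exact claim f hf f1 f2 (by linarith) (by linarith)⟩
      simp [this]
  have := Finset.card_le_card key
  have h1 := Finset.card_union_le (T ∪ A) B
  have h2 := Finset.card_union_le T A
  omega

theorem Bk.count (V : Finset ℝ) (a : ℕ) (W : Finset ℝ) (hW : W ⊆ V) :
    (Finset.univ.filter fun f : V → Fin (a + 1) => ∀ v : V, v.1 ∈ W → f v = 0).card * (a + 1) ^ W.card
      = (a + 1) ^ V.card := by
  classical
  have h1 : (Finset.univ.filter fun f : V → Fin (a + 1) => ∀ v : V, v.1 ∈ W → f v = 0)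
      = Fintype.piFinset (fun v : V => if v.1 ∈ W then ({0} : Finset (Fin (a + 1))) else Finset.univ) := by
    ext f
    simp only [Finset.mem_filter, Finset.mem_univ, true_and, Fintype.mem_piFinset]
    refine forall_congr' fun v => ?_
    split_ifs with h <;> simp [h]
  rw [h1, Fintype.card_piFinset]
  have h2 : ∀ v : V, (if v.1 ∈ W then ({0} : Finset (Fin (a + 1))) else Finset.univ).card
      = if v.1 ∈ W then 1 else (a + 1) := by
    intro v; split_ifs <;> simp
  simp only [h2]
  rw [Finset.prod_coe_sort V (fun v => if v ∈ W then 1 else (a + 1))]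
  rw [Finset.prod_ite]
  simp only [Finset.prod_const_one, one_mul, Finset.prod_const]
  rw [← pow_add]
  congr 1
  have : (V.filter (fun x => x ∈ W)) = W := by
    ext x; simp only [Finset.mem_filter]; exact ⟨fun h => h.2, fun h => ⟨hW h, h⟩⟩
  have h3 := Finset.card_filter_add_card_filter_not (s := V) (fun x => x ∈ W)
  rw [this] at h3
  omega

/-- crossing number inequality -/
theorem Bk.crossing {ι : Type} [DecidableEq ι] (V : Finset ℝ) (E : Finset ι) (l r : ι → ℝ)
    (X : Finset (ι × ι))
    (hl : ∀ i ∈ E, l i ∈ V) (hr : ∀ i ∈ E, r i ∈ V) (hlr : ∀ i ∈ E, l i < r i)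
    (hX : ∀ p ∈ X, p.1 ∈ E ∧ p.2 ∈ E ∧ l p.1 ≠ l p.2 ∧ l p.1 ≠ r p.2 ∧ r p.1 ≠ l p.2 ∧ r p.1 ≠ r p.2)
    (hpl : ∀ W ⊆ V, (E.filter fun i => l i ∈ W ∧ r i ∈ W).card ≤ 3 * W.card +
      (X.filter fun p => (l p.1 ∈ W ∧ r p.1 ∈ W) ∧ (l p.2 ∈ W ∧ r p.2 ∈ W)).card) (a : ℕ) :
    E.card * (a + 1) ^ 2 ≤ 3 * V.card * (a + 1) ^ 3 + X.card := by
  classical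
  set N := (a + 1) ^ V.card with hN
  let F : Finset (V → Fin (a + 1)) := Finset.univ
  let W : (V → Fin (a + 1)) → Finset ℝ := fun f => (V.attach.filter fun v => f v = 0).image Subtype.val
  have hWm : ∀ f (v : ℝ), v ∈ W f ↔ ∃ hv : v ∈ V, f ⟨v, hv⟩ = 0 := by
    intro f v; simp [W]
  have hWV : ∀ f, W f ⊆ V := by
    intro f v hv; exact ((hWm f v).1 hv).1
  have cnt : ∀ Z ⊆ V, (F.filter fun f => Z ⊆ W f).card * (a + 1) ^ Z.card = N := by
    intro Z hZ
    rw [hN, ← Bk.count V a Z hZ]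
    congr 2
    ext f
    simp only [F, Finset.mem_filter, Finset.mem_univ, true_and]
    constructor
    · intro h v hv
      obtain ⟨_, h2⟩ := (hWm f v).1 (h hv)
      exact h2
    · intro h v hv
      exact (hWm f v).2 ⟨hZ hv, h ⟨v, hZ hv⟩ hv⟩
  have hsum := Finset.sum_le_sum (s := F) fun f _ => hpl (W f) (hWV f)
  rw [Finset.sum_add_distrib, ← Finset.mul_sum] at hsum
  have e1 : (∑ f ∈ F, (E.filter fun i => l i ∈ W f ∧ r i ∈ W f).card) * (a + 1) ^ 2 = E.card * N := by
    simp only [Finset.card_filter]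
    rw [Finset.sum_comm, Finset.sum_mul, Finset.card_eq_sum_ones, Finset.sum_mul]
    refine Finset.sum_congr rfl fun i hi => ?_
    rw [← Finset.card_filter, one_mul, ← cnt {l i, r i}, Finset.card_pair (hlr i hi).ne]
    · congr 2
      ext f; simp [Finset.insert_subset_iff]
    · simp [Finset.insert_subset_iff, hl i hi, hr i hi]
  have e2 : (∑ f ∈ F, (W f).card) * (a + 1) = V.card * N := by
    have : ∀ f, (W f).card = (V.filter fun v => v ∈ W f).card := by
      intro f; congr 1; ext v; simp only [Finset.mem_filter]
      exact ⟨fun h => ⟨hWV f h, h⟩, fun h => h.2⟩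
    simp only [this]
    simp only [Finset.card_filter]
    rw [Finset.sum_comm, Finset.sum_mul, Finset.card_eq_sum_ones, Finset.sum_mul]
    refine Finset.sum_congr rfl fun v hv => ?_
    rw [← Finset.card_filter, one_mul, ← cnt {v} (by simpa using hv)]
    simp
  have e3 : (∑ f ∈ F, (X.filter fun p => (l p.1 ∈ W f ∧ r p.1 ∈ W f) ∧ (l p.2 ∈ W f ∧ r p.2 ∈ W f)).card)
      * (a + 1) ^ 4 = X.card * N := by
    simp only [Finset.card_filter]
    rw [Finset.sum_comm, Finset.sum_mul, Finset.card_eq_sum_ones, Finset.sum_mul]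
    refine Finset.sum_congr rfl fun p hp => ?_
    obtain ⟨h1, h2, h3, h4, h5, h6⟩ := hX p hp
    have h7 := (hlr _ h1).ne
    have h8 := (hlr _ h2).ne
    have hc : ({l p.1, r p.1, l p.2, r p.2} : Finset ℝ).card = 4 := by
      rw [Finset.card_insert_of_notMem, Finset.card_insert_of_notMem, Finset.card_pair h8]
      · simp [h5, h6]
      · simp [h7, h3, h4]
    rw [← Finset.card_filter, one_mul, ← cnt {l p.1, r p.1, l p.2, r p.2}, hc]
    · congr 2
      ext f; simp [Finset.insert_subset_iff, and_assoc]
    · simp [Finset.insert_subset_iff, hl _ h1, hr _ h1, hl _ h2, hr _ h2]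
  have hNpos : 0 < N := by positivity
  have := Nat.mul_le_mul_right ((a + 1) ^ 4) hsum
  refine Nat.le_of_mul_le_mul_right (c := N) ?_ hNpos
  generalize (∑ f ∈ F, (E.filter fun i => l i ∈ W f ∧ r i ∈ W f).card) = s1 at *
  generalize (∑ f ∈ F, (W f).card) = s2 at *
  generalize (∑ f ∈ F, (X.filter fun p => (l p.1 ∈ W f ∧ r p.1 ∈ W f) ∧ (l p.2 ∈ W f ∧ r p.2 ∈ W f)).card) = s3 at *
  calc E.card * (a + 1) ^ 2 * N = (s1 * (a+1)^2) * (a+1)^2 := by rw [e1]; ring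
    _ = s1 * (a+1)^4 := by ring
    _ ≤ _ := this
    _ = 3 * (s2 * (a+1)) * (a+1)^3 + s3 * (a+1)^4 := by ring
    _ = _ := by rw [e2, e3]; ring

/-- Szemeredi-Trotter type inequality for points with distinct abscissae. -/
theorem Bk.st (V : Finset ℝ) (h : ℝ → ℝ) (Ls : Finset (ℝ × ℝ)) (k : ℕ)
    (hk : ∀ p ∈ Ls, k + 1 ≤ (V.filter fun x => h x = p.1 * x + p.2).card) (a : ℕ) :
    Ls.card * k * (a + 1) ^ 2 ≤ 3 * V.card * (a + 1) ^ 3 + Ls.card ^ 2 := by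
  classical
  let pts : ℝ × ℝ → Finset ℝ := fun p => V.filter fun x => h x = p.1 * x + p.2
  have hnext : ∀ p : ℝ × ℝ, ∀ x : ℝ, ∃ y : ℝ, (∃ z ∈ pts p, x < z) →
      y ∈ pts p ∧ x < y ∧ ∀ z ∈ pts p, x < z → y ≤ z := by
    intro p x
    by_cases hz : ∃ z ∈ pts p, x < z
    · obtain ⟨z, hz1, hz2⟩ := hz
      obtain ⟨y, hy, hy2⟩ := Finset.exists_min_image ((pts p).filter fun z => x < z) id
        ⟨z, Finset.mem_filter.2 ⟨hz1, hz2⟩⟩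
      obtain ⟨hy3, hy4⟩ := Finset.mem_filter.1 hy
      exact ⟨y, fun _ => ⟨hy3, hy4, fun z h1 h2 => hy2 z (Finset.mem_filter.2 ⟨h1, h2⟩)⟩⟩
    · exact ⟨0, fun hh => (hz hh).elim⟩
  choose nx hnx using hnext
  let E : Finset (Σ _ : ℝ × ℝ, ℝ) := Ls.sigma fun p => (pts p).filter fun x => ∃ z ∈ pts p, x < z
  let l : (Σ _ : ℝ × ℝ, ℝ) → ℝ := fun i => i.2
  let r : (Σ _ : ℝ × ℝ, ℝ) → ℝ := fun i => nx i.1 i.2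
  let m : (Σ _ : ℝ × ℝ, ℝ) → ℝ := fun i => i.1.1
  let b : (Σ _ : ℝ × ℝ, ℝ) → ℝ := fun i => i.1.2
  have hE : ∀ i ∈ E, i.1 ∈ Ls ∧ l i ∈ V ∧ h (l i) = m i * l i + b i ∧ r i ∈ V ∧
      h (r i) = m i * r i + b i ∧ l i < r i ∧ ∀ z ∈ V, h z = m i * z + b i → l i < z → r i ≤ z := by
    intro i hi
    obtain ⟨h1, h2⟩ := Finset.mem_sigma.1 hi
    obtain ⟨h3, h4⟩ := Finset.mem_filter.1 h2
    obtain ⟨h5, h6, h7⟩ := hnx i.1 i.2 h4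
    obtain ⟨h8, h9⟩ := Finset.mem_filter.1 h3
    obtain ⟨h10, h11⟩ := Finset.mem_filter.1 h5
    exact ⟨h1, h8, h9, h10, h11, h6, fun z hz hz2 => h7 z (Finset.mem_filter.2 ⟨hz, hz2⟩)⟩
  have huniq : ∀ i ∈ E, ∀ j ∈ E, i.1 = j.1 → ∀ x, l i < x → x < r i → l j < x → x < r j → i = j := by
    intro i hi j hj hij x h1 h2 h3 h4
    obtain ⟨_, a1, a2, _, _, _, a3⟩ := hE i hi
    obtain ⟨_, b1, b2, _, _, _, b3⟩ := hE j hj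
    have e1 : m i = m j := by simp only [m, hij]
    have e2 : b i = b j := by simp only [b, hij]
    rw [e1, e2] at a2 a3
    have h5 : l i = l j := by
      rcases lt_trichotomy (l i) (l j) with h6 | h6 | h6
      · have := a3 _ b1 b2 h6; linarith
      · exact h6
      · have := b3 _ a1 a2 h6; linarith
    exact Sigma.ext hij (heq_of_eq h5)
  let cr : (Σ _ : ℝ × ℝ, ℝ) → (Σ _ : ℝ × ℝ, ℝ) → ℝ → Prop := fun i j x =>
    l i < x ∧ x < r i ∧ l j < x ∧ x < r j ∧ m i * x + b i = m j * x + b j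
  let X := (E ×ˢ E).filter fun p => p.1 ≠ p.2 ∧ ∃ x, cr p.1 p.2 x
  have hXm : ∀ p ∈ X, p.1 ∈ E ∧ p.2 ∈ E ∧ p.1 ≠ p.2 ∧ ∃ x, cr p.1 p.2 x := by
    intro p hp
    obtain ⟨h1, h2, h3⟩ := Finset.mem_filter.1 hp
    obtain ⟨h4, h5⟩ := Finset.mem_product.1 h1
    exact ⟨h4, h5, h2, h3⟩
  have hdiff : ∀ i ∈ E, ∀ j ∈ E, i ≠ j → ∀ x, cr i j x → m i ≠ m j := by
    rintro i hi j hj hij x ⟨h1, h2, h3, h4, h5⟩ h6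
    have h7 : b i = b j := by rw [h6] at h5; linarith
    exact hij (huniq i hi j hj (Prod.ext h6 h7) x h1 h2 h3 h4)
  have hXc : X.card ≤ Ls.card ^ 2 := by
    rw [sq, ← Finset.card_product]
    apply Finset.card_le_card_of_injOn (fun p => (p.1.1, p.2.1))
    · intro p hp
      obtain ⟨h1, h2, _⟩ := hXm p hp
      exact Finset.mem_product.2 ⟨(hE _ h1).1, (hE _ h2).1⟩
    · rintro ⟨i, j⟩ hp ⟨i', j'⟩ hq hpq
      obtain ⟨h1, h2, h3, x, hx⟩ := hXm _ hp
      obtain ⟨g1, g2, g3, y, hy⟩ := hXm _ hq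
      simp only [Prod.mk.injEq] at hpq h1 h2 h3 hx g1 g2 g3 hy
      have hm := hdiff i h1 j h2 h3 x hx
      obtain ⟨x1, x2, x3, x4, x5⟩ := hx
      obtain ⟨y1, y2, y3, y4, y5⟩ := hy
      have e1 : m i = m i' := by simp only [m, hpq.1]
      have e2 : b i = b i' := by simp only [b, hpq.1]
      have e3 : m j = m j' := by simp only [m, hpq.2]
      have e4 : b j = b j' := by simp only [b, hpq.2]
      rw [← e1, ← e2, ← e3, ← e4] at y5
      have hxy : x = y := by
        have : (m i - m j) * (x - y) = 0 := by linarith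
        rcases mul_eq_zero.1 this with h | h
        · exact (hm (by linarith)).elim
        · linarith
      subst hxy
      rw [huniq i h1 i' g1 hpq.1 x x1 x2 y1 y2, huniq j h2 j' g2 hpq.2 x x3 x4 y3 y4]
  have hEc : Ls.card * k ≤ E.card := by
    rw [Finset.card_sigma, ← smul_eq_mul, ← Finset.sum_const]
    refine Finset.sum_le_sum fun p hp => ?_
    have h1 := hk p hp
    have hne : (pts p).Nonempty := Finset.card_pos.1 (by
      change k + 1 ≤ (pts p).card at h1; omega)
    obtain ⟨z, hz, hz2⟩ := Finset.exists_max_image (pts p) id hne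
    have h2 : (pts p).erase z ⊆ (pts p).filter fun x => ∃ z ∈ pts p, x < z := by
      intro x hx
      obtain ⟨h3, h4⟩ := Finset.mem_erase.1 hx
      exact Finset.mem_filter.2 ⟨h4, z, hz, lt_of_le_of_ne (hz2 x h4) h3⟩
    have h3 := Finset.card_le_card h2
    rw [Finset.card_erase_of_mem hz] at h3
    change k + 1 ≤ (pts p).card at h1
    omega
  have main := Bk.crossing V E l r X (fun i hi => (hE i hi).2.1) (fun i hi => (hE i hi).2.2.2.1)
    (fun i hi => (hE i hi).2.2.2.2.2.1) ?_ ?_ a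
  · calc Ls.card * k * (a + 1) ^ 2 ≤ E.card * (a + 1) ^ 2 := Nat.mul_le_mul_right _ hEc
      _ ≤ _ := main
      _ ≤ _ := Nat.add_le_add_left hXc _
  · intro p hp
    obtain ⟨h1, h2, h3, x, hx⟩ := hXm p hp
    have hm := hdiff _ h1 _ h2 h3 x hx
    obtain ⟨x1, x2, x3, x4, x5⟩ := hx
    obtain ⟨_, _, a2, _, a4, _, _⟩ := hE _ h1
    obtain ⟨_, _, b2, _, b4, _, _⟩ := hE _ h2
    refine ⟨h1, h2, ?_, by linarith, by linarith, ?_⟩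
    · intro hh
      rw [hh] at a2
      have : (m p.1 - m p.2) * (x - l p.2) = 0 := by linarith
      rcases mul_eq_zero.1 this with h | h
      · exact hm (by linarith)
      · linarith
    · intro hh
      rw [hh] at a4
      have : (m p.1 - m p.2) * (x - r p.2) = 0 := by linarith
      rcases mul_eq_zero.1 this with h | h
      · exact hm (by linarith)
      · linarith
  · intro W hW
    set EW := E.filter fun i => l i ∈ W ∧ r i ∈ W with hEW
    set XW := X.filter fun p => (l p.1 ∈ W ∧ r p.1 ∈ W) ∧ (l p.2 ∈ W ∧ r p.2 ∈ W) with hXW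
    have hmem : ∀ i ∈ EW \ XW.image Prod.fst, i ∈ E ∧ l i ∈ W ∧ r i ∈ W ∧ i ∉ XW.image Prod.fst := by
      intro i hi
      obtain ⟨h1, h2⟩ := Finset.mem_sdiff.1 hi
      obtain ⟨h3, h4, h5⟩ := Finset.mem_filter.1 h1
      exact ⟨h3, h4, h5, h2⟩
    have hp := Bk.planar W h (EW \ XW.image Prod.fst) l r m b
      (fun i hi => (hmem i hi).2.1) (fun i hi => (hmem i hi).2.2.1)
      (fun i hi => (hE i (hmem i hi).1).2.2.2.2.2.1)
      (fun i hi => (hE i (hmem i hi).1).2.2.1)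
      (fun i hi => (hE i (hmem i hi).1).2.2.2.2.1)
      (fun i hi p hp h1 h2 h3 => by
        have := (hE i (hmem i hi).1).2.2.2.2.2.2 p (hW hp) h3 h1
        linarith)
      (fun i hi j hj hij x h1 h2 h3 h4 h5 => by
        obtain ⟨i1, i2, i3, i4⟩ := hmem i hi
        obtain ⟨j1, j2, j3, j4⟩ := hmem j hj
        apply i4
        refine Finset.mem_image.2 ⟨(i, j), Finset.mem_filter.2 ⟨Finset.mem_filter.2
          ⟨Finset.mem_product.2 ⟨i1, j1⟩, hij, x, h1, h2, h3, h4, h5⟩, ⟨i2, i3⟩, j2, j3⟩, rfl⟩)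
    have h1 : (XW.image Prod.fst).card ≤ XW.card := Finset.card_image_le
    have h2 := Finset.le_card_sdiff (XW.image Prod.fst) EW
    omega

/-- few points on rich lines: elementary bound. -/
theorem Bk.elem {α lam : Type} [DecidableEq α] [DecidableEq lam] (S : Finset α) (LL : Finset lam)
    (B : lam → Finset α)
    (hex : ∀ p ∈ S, ∀ q ∈ S, p ≠ q → ∃ L ∈ LL, p ∈ B L ∧ q ∈ B L)
    (hun : ∀ L ∈ LL, ∀ L' ∈ LL, ∀ p q, p ≠ q → p ∈ B L → q ∈ B L → p ∈ B L' → q ∈ B L' → L = L')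
    (L0 : lam) (hL0 : L0 ∈ LL) (hL0S : B L0 ⊆ S) (T : Finset α) (hT : T ⊆ S \ B L0) :
    T.card * (B L0).card ≤ LL.card + T.card ^ 2 := by
  classical
  let ln : α → Finset lam := fun q => LL.filter fun L => q ∈ B L ∧ ∃ p ∈ B L0, p ∈ B L
  suffices h : T.card * (B L0).card ≤ (T.biUnion ln).card + T.card ^ 2 by
    have : (T.biUnion ln).card ≤ LL.card := by
      apply Finset.card_le_card
      intro L hL
      obtain ⟨q, _, hq⟩ := Finset.mem_biUnion.1 hL
      exact (Finset.mem_filter.1 hq).1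
    omega
  have hln : ∀ q ∈ S \ B L0, (B L0).card ≤ (ln q).card := by
    intro q hq
    obtain ⟨hqS, hq0⟩ := Finset.mem_sdiff.1 hq
    apply Finset.card_le_card_of_forall_subsingleton (fun p L => p ∈ B L)
    · intro p hp
      have hpq : p ≠ q := by rintro rfl; exact hq0 hp
      obtain ⟨L, h1, h2, h3⟩ := hex p (hL0S hp) q hqS hpq
      exact ⟨L, Finset.mem_filter.2 ⟨h1, h3, p, hp, h2⟩, h2⟩
    · rintro L hL p ⟨hp, hpL⟩ p' ⟨hp', hpL'⟩
      obtain ⟨h1, h2, _⟩ := Finset.mem_filter.1 hL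
      by_contra hne
      have := hun L h1 L0 hL0 p p' hne hpL hpL' hp hp'
      rw [this] at h2
      exact hq0 h2
  induction T using Finset.induction_on with
  | empty => simp
  | insert q T hqT ih =>
    have hqS := hT (Finset.mem_insert_self q T)
    have hTS : T ⊆ S \ B L0 := fun x hx => hT (Finset.mem_insert_of_mem hx)
    have ih := ih hTS
    rw [Finset.card_insert_of_notMem hqT, Finset.biUnion_insert]
    have h1 := Finset.card_union_add_card_inter (ln q) (T.biUnion ln)
    have h2 := hln q hqS
    have h3 : (ln q ∩ T.biUnion ln).card ≤ T.card := by
      apply Finset.card_le_card_of_forall_subsingleton (fun L p => p ∈ B L)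
      · intro L hL
        obtain ⟨_, h5⟩ := Finset.mem_inter.1 hL
        obtain ⟨p, hp, hpL⟩ := Finset.mem_biUnion.1 h5
        exact ⟨p, hp, (Finset.mem_filter.1 hpL).2.1⟩
      · rintro p hp L ⟨hL, hpL⟩ L' ⟨hL', hpL'⟩
        have a1 := Finset.mem_filter.1 (Finset.mem_inter.1 hL).1
        have a2 := Finset.mem_filter.1 (Finset.mem_inter.1 hL').1
        exact hun L a1.1 L' a2.1 p q (by rintro rfl; exact hqT hp) hpL a1.2.1 hpL' a2.2.1
    nlinarith

theorem Bk.opt (t k n : ℕ) (hn : 0 < n)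
    (h : ∀ a : ℕ, t * k * (a + 1) ^ 2 ≤ 3 * n * (a + 1) ^ 3 + t ^ 2) :
    t * k ^ 3 ≤ 6 * n * k ^ 2 + 288 * n ^ 2 := by
  rcases lt_or_ge (t * k) (6 * n) with h1 | h1
  · have : t * k ^ 3 = (t * k) * k ^ 2 := by ring
    nlinarith [Nat.mul_le_mul_right (k ^ 2) h1.le]
  · have hd : 1 ≤ t * k / (6 * n) := (Nat.one_le_div_iff (by omega)).2 h1
    obtain ⟨a, ha⟩ : ∃ a, t * k / (6 * n) = a + 1 := ⟨t * k / (6 * n) - 1, by omega⟩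
    have h2 := h a
    have h3 : (a + 1) * (6 * n) ≤ t * k := by rw [← ha]; exact Nat.div_mul_le_self _ _
    have h4 : t * k < (a + 1 + 1) * (6 * n) := by
      rw [← ha, add_mul, one_mul]; exact Nat.lt_div_mul_add (by omega)
    have h5 : t * k ≤ 12 * n * (a + 1) := by nlinarith
    have h6 : t * k * (a + 1) ^ 2 ≤ 2 * t ^ 2 := by
      nlinarith [Nat.mul_le_mul_right ((a + 1) ^ 2) h3]
    have h7 : (t * k) ^ 3 ≤ 288 * n ^ 2 * t ^ 2 := by
      calc (t * k) ^ 3 = (t * k) * (t * k) ^ 2 := by ring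
        _ ≤ (t * k) * (12 * n * (a + 1)) ^ 2 := by gcongr
        _ = 144 * n ^ 2 * (t * k * (a + 1) ^ 2) := by ring
        _ ≤ 144 * n ^ 2 * (2 * t ^ 2) := by gcongr
        _ = _ := by ring
    have ht : 0 < t ^ 2 := by
      have : 0 < t := by
        rcases Nat.eq_zero_or_pos t with h | h
        · subst h; omega
        · exact h
      positivity
    have : t * k ^ 3 ≤ 288 * n ^ 2 := by
      refine Nat.le_of_mul_le_mul_right (c := t ^ 2) ?_ ht
      calc t * k ^ 3 * t ^ 2 = (t * k) ^ 3 := by ring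
        _ ≤ _ := h7
    omega

theorem Bk.abs {α lam : Type} [DecidableEq α] [DecidableEq lam] (S : Finset α) (LL : Finset lam)
    (B : lam → Finset α) (hS : ∀ L ∈ LL, B L ⊆ S) (h2 : ∀ L ∈ LL, 2 ≤ (B L).card)
    (hex : ∀ p ∈ S, ∀ q ∈ S, p ≠ q → ∃ L ∈ LL, p ∈ B L ∧ q ∈ B L)
    (hun : ∀ L ∈ LL, ∀ L' ∈ LL, ∀ p q, p ≠ q → p ∈ B L → q ∈ B L → p ∈ B L' → q ∈ B L' → L = L')
    (hst : ∀ M ⊆ LL, ∀ k : ℕ, (∀ L ∈ M, k + 1 ≤ (B L).card) → ∀ a : ℕ,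
      M.card * k * (a + 1) ^ 2 ≤ 3 * S.card * (a + 1) ^ 3 + M.card ^ 2)
    (r : ℕ) (L0 : lam) (hL0 : L0 ∈ LL) (hr : (B L0).card = r) (hmax : ∀ L ∈ LL, (B L).card ≤ r) :
    (r : ℝ) * ((S.card : ℝ) - r) ≤ 2 ^ 32 * (LL.card : ℝ) := by
  classical
  have hr2 : 2 ≤ r := hr ▸ h2 L0 hL0
  have hrn : r ≤ S.card := hr ▸ Finset.card_le_card (hS L0 hL0)
  set n := S.card with hn
  rcases le_or_gt n (384 * r) with hcase | hcase
  · have hm : (S \ B L0).card = n - r := by rw [Finset.card_sdiff_of_subset (hS L0 hL0), hr]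
    obtain ⟨T, hT, hTc⟩ := Finset.exists_subset_card_eq (s := S \ B L0) (n := min (n - r) (r / 2))
      (by rw [hm]; exact min_le_left _ _)
    have h := Bk.elem S LL B hex hun L0 hL0 (hS L0 hL0) T hT
    rw [hTc, hr] at h
    set s := min (n - r) (r / 2) with hs
    have h3 : s * r ≤ 2 * LL.card := by
      have : 2 * s ≤ r := by omega
      nlinarith [Nat.mul_le_mul_left s this]
    have h4 : r * (n - r) ≤ 2304 * LL.card := by
      rcases min_choice (n - r) (r / 2) with h5 | h5
      · rw [← hs] at h5
        rw [← h5, mul_comm]; omega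
      · rw [← hs] at h5
        have h6 : r ≤ 3 * s := by omega
        calc r * (n - r) ≤ r * (384 * (3 * s)) := by gcongr; omega
          _ = 1152 * (s * r) := by ring
          _ ≤ 1152 * (2 * LL.card) := by gcongr
          _ = _ := by ring
    have h5 : ((r * (n - r) : ℕ) : ℝ) ≤ ((2304 * LL.card : ℕ) : ℝ) := by exact_mod_cast h4
    push_cast [Nat.cast_sub hrn] at h5
    have : (0 : ℝ) ≤ LL.card := by positivity
    linarith
  · have hpairs : n * n - n ≤ ∑ L ∈ LL, (B L).card ^ 2 := by
      rw [hn, ← Finset.offDiag_card]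
      calc S.offDiag.card ≤ (LL.biUnion fun L => B L ×ˢ B L).card := by
            apply Finset.card_le_card
            rintro ⟨p, q⟩ hpq
            obtain ⟨hp, hq, hne⟩ := Finset.mem_offDiag.1 hpq
            obtain ⟨L, h3, h4, h5⟩ := hex p hp q hq hne
            exact Finset.mem_biUnion.2 ⟨L, h3, Finset.mem_product.2 ⟨h4, h5⟩⟩
        _ ≤ ∑ L ∈ LL, (B L ×ˢ B L).card := Finset.card_biUnion_le
        _ = _ := by simp [Finset.card_product, sq]
    have hpairs' : (n : ℝ) * n - n ≤ ∑ L ∈ LL, ((B L).card : ℝ) ^ 2 := by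
      have : ((n * n - n : ℕ) : ℝ) ≤ ((∑ L ∈ LL, (B L).card ^ 2 : ℕ) : ℝ) := by exact_mod_cast hpairs
      rw [Nat.cast_sub (Nat.le_mul_self n)] at this
      push_cast at this
      exact this
    rw [← Finset.sum_filter_add_sum_filter_not LL (fun L => (B L).card ≤ 2 ^ 15)] at hpairs'
    have hsmall : ∑ L ∈ LL with (B L).card ≤ 2 ^ 15, ((B L).card : ℝ) ^ 2 ≤ LL.card * 2 ^ 30 := by
      calc _ ≤ ∑ L ∈ LL with (B L).card ≤ 2 ^ 15, (2 : ℝ) ^ 30 := by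
            refine Finset.sum_le_sum fun L hL => ?_
            have h3 : ((B L).card : ℝ) ≤ 2 ^ 15 := by exact_mod_cast (Finset.mem_filter.1 hL).2
            calc ((B L).card : ℝ) ^ 2 ≤ (2 ^ 15) ^ 2 := by gcongr
              _ = 2 ^ 30 := by norm_num
        _ = (LL.filter fun L => (B L).card ≤ 2 ^ 15).card * (2 : ℝ) ^ 30 := by simp
        _ ≤ _ := by
            gcongr
            exact Finset.filter_subset _ _
    set J := Nat.log 2 r with hJ
    have hbig : ∑ L ∈ LL with ¬ (B L).card ≤ 2 ^ 15, ((B L).card : ℝ) ^ 2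
        ≤ 48 * n * r + 2304 / 2 ^ 15 * n ^ 2 := by
      have hmaps : ∀ L ∈ LL.filter (fun L => ¬ (B L).card ≤ 2 ^ 15),
          Nat.log 2 ((B L).card - 1) ∈ Finset.Ico 15 (J + 1) := by
        intro L hL
        obtain ⟨h3, h4⟩ := Finset.mem_filter.1 hL
        have h5 := hmax L h3
        rw [Finset.mem_Ico]
        constructor
        · exact Nat.le_log_of_pow_le (by norm_num) (by omega)
        · have : Nat.log 2 ((B L).card - 1) ≤ Nat.log 2 r := Nat.log_mono_right (by omega)
          omega
      rw [← Finset.sum_fiberwise_of_maps_to hmaps]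
      have hlev : ∀ j ∈ Finset.Ico 15 (J + 1),
          ∑ L ∈ LL.filter (fun L => ¬ (B L).card ≤ 2 ^ 15) with Nat.log 2 ((B L).card - 1) = j,
            ((B L).card : ℝ) ^ 2 ≤ 24 * n * 2 ^ j + 1152 * n ^ 2 * (1 / 2) ^ j := by
        intro j _
        set M := (LL.filter (fun L => ¬ (B L).card ≤ 2 ^ 15)).filter
          (fun L => Nat.log 2 ((B L).card - 1) = j) with hM
        have hMm : ∀ L ∈ M, L ∈ LL ∧ 2 ^ j + 1 ≤ (B L).card ∧ (B L).card ≤ 2 ^ (j + 1) := by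
          intro L hL
          obtain ⟨h3, h4⟩ := Finset.mem_filter.1 hL
          obtain ⟨h5, h6⟩ := Finset.mem_filter.1 h3
          have h7 := Nat.pow_log_le_self 2 (x := (B L).card - 1) (by omega)
          have h8 := Nat.lt_pow_succ_log_self (b := 2) (by norm_num) ((B L).card - 1)
          rw [h4] at h7 h8
          exact ⟨h5, by omega, by omega⟩
        have h3 := Bk.opt M.card (2 ^ j) n (by omega)
          (hst M (fun L hL => (hMm L hL).1) (2 ^ j) (fun L hL => (hMm L hL).2.1))
        have h3' : (M.card : ℝ) * (2 ^ j) ^ 3 ≤ 6 * n * (2 ^ j) ^ 2 + 288 * n ^ 2 := by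
          exact_mod_cast h3
        have h4 : ∑ L ∈ M, ((B L).card : ℝ) ^ 2 ≤ M.card * (4 * (2 ^ j) ^ 2) := by
          calc _ ≤ ∑ L ∈ M, (4 * (2 ^ j) ^ 2 : ℝ) := by
                refine Finset.sum_le_sum fun L hL => ?_
                have h5 : ((B L).card : ℝ) ≤ 2 ^ (j + 1) := by exact_mod_cast (hMm L hL).2.2
                calc ((B L).card : ℝ) ^ 2 ≤ (2 ^ (j + 1)) ^ 2 := by gcongr
                  _ = _ := by ring
            _ = _ := by simp
        refine h4.trans ?_
        rw [one_div, inv_pow]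
        have hp : (0 : ℝ) < 2 ^ j := by positivity
        generalize (2 : ℝ) ^ j = z at *
        refine le_of_mul_le_mul_right ?_ hp
        have : (24 * n * z + 1152 * n ^ 2 * z⁻¹) * z = 24 * n * z ^ 2 + 1152 * (n : ℝ) ^ 2 := by
          field_simp
        rw [this]
        nlinarith
      refine (Finset.sum_le_sum hlev).trans ?_
      rw [Finset.sum_add_distrib, ← Finset.mul_sum, ← Finset.mul_sum]
      have g1 : ∑ j ∈ Finset.Ico 15 (J + 1), (2 : ℝ) ^ j ≤ 2 * r := by
        calc ∑ j ∈ Finset.Ico 15 (J + 1), (2 : ℝ) ^ j ≤ ∑ j ∈ Finset.range (J + 1), (2 : ℝ) ^ j := by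
              apply Finset.sum_le_sum_of_subset_of_nonneg
              · intro j hj; rw [Finset.mem_range]; exact (Finset.mem_Ico.1 hj).2
              · intros; positivity
          _ = 2 ^ (J + 1) - 1 := by rw [geom_sum_eq (by norm_num)]; norm_num
          _ ≤ 2 * 2 ^ J := by rw [pow_succ]; linarith
          _ ≤ 2 * r := by
              have : (2 : ℝ) ^ J ≤ r := by exact_mod_cast Nat.pow_log_le_self 2 (by omega)
              linarith
      have g2 : ∑ j ∈ Finset.Ico 15 (J + 1), (1 / 2 : ℝ) ^ j ≤ 2 / 2 ^ 15 := by
        rw [Finset.sum_Ico_eq_sum_range]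
        simp only [pow_add]
        rw [← Finset.mul_sum, geom_sum_eq (by norm_num)]
        have : (0 : ℝ) ≤ (1 / 2) ^ (J + 1 - 15) := by positivity
        generalize (1 / 2 : ℝ) ^ (J + 1 - 15) = z at *
        have e : (z - 1) / (1 / 2 - 1) = 2 * (1 - z) := by norm_num; ring
        rw [e]
        norm_num
        linarith
      have hn0 : (0 : ℝ) ≤ n := by positivity
      nlinarith [mul_le_mul_of_nonneg_left g1 hn0, mul_le_mul_of_nonneg_left g2 (sq_nonneg (n : ℝ))]
    have hc : (384 * r : ℝ) ≤ n := by exact_mod_cast hcase.le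
    have hr0 : (2 : ℝ) ≤ r := by exact_mod_cast hr2
    have q1 : (n : ℝ) * (384 * r) ≤ n * n := by gcongr
    have q2 : (n : ℝ) * 768 ≤ n * n := by
      have : (768 : ℝ) ≤ n := by linarith
      gcongr
    have q3 : (n : ℝ) * n / 4 ≤ LL.card * 2 ^ 30 := by
      norm_num at hbig hsmall hpairs' ⊢
      nlinarith
    have q4 : (r : ℝ) * (n - r) ≤ n * n := by nlinarith
    norm_num at q3 ⊢
    linarith

theorem Bk.shear (S : Finset (ℝ × ℝ)) : ∃ s : ℝ, ∀ p ∈ S, ∀ q ∈ S,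
    p.1 + s * p.2 = q.1 + s * q.2 → p = q := by
  classical
  obtain ⟨s, hs⟩ := Infinite.exists_notMem_finset
    ((S ×ˢ S).image fun w : (ℝ × ℝ) × (ℝ × ℝ) => (w.2.1 - w.1.1) / (w.1.2 - w.2.2))
  refine ⟨s, fun p hp q hq h => ?_⟩
  by_cases h2 : p.2 = q.2
  · exact Prod.ext (by rw [h2] at h; linarith) h2
  · exfalso
    apply hs
    refine Finset.mem_image.2 ⟨(p, q), Finset.mem_product.2 ⟨hp, hq⟩, ?_⟩
    have : p.2 - q.2 ≠ 0 := sub_ne_zero.2 h2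
    simp only
    rw [div_eq_iff this]
    linarith

theorem Bk.line_eq (S : Finset (ℝ × ℝ)) (s : ℝ)
    (hs : ∀ p ∈ S, ∀ q ∈ S, p.1 + s * p.2 = q.1 + s * q.2 → p = q)
    (L : Set (ℝ × ℝ)) (hL : L ∈ InducedLines S) :
    ∃ w : ℝ × ℝ, ∀ p : ℝ × ℝ, p ∈ L ↔ p.2 = w.1 * (p.1 + s * p.2) + w.2 := by
  obtain ⟨⟨u, v, huv, rfl⟩, p, hp, q, hq, hpq, hpL, hqL⟩ := hL
  have hmem : ∀ z : ℝ × ℝ, z ∈ lineThrough u v ↔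
      ∃ t : ℝ, z.1 = u.1 + t * (v.1 - u.1) ∧ z.2 = u.2 + t * (v.2 - u.2) := by
    intro z
    unfold lineThrough
    rw [SetLike.mem_coe, mem_affineSpan_pair_iff_exists_lineMap_eq]
    refine exists_congr fun t => ?_
    rw [AffineMap.lineMap_apply, Prod.ext_iff]
    simp only [vsub_eq_sub, vadd_eq_add, Prod.fst_add, Prod.snd_add, Prod.smul_fst, Prod.smul_snd,
      Prod.fst_sub, Prod.snd_sub, smul_eq_mul]
    constructor
    · rintro ⟨h1, h2⟩; constructor <;> linarith
    · rintro ⟨h1, h2⟩; constructor <;> linarith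
  have hd : (v.1 - u.1) + s * (v.2 - u.2) ≠ 0 := by
    intro h0
    obtain ⟨t, h1, h2⟩ := (hmem p).1 hpL
    obtain ⟨t', h3, h4⟩ := (hmem q).1 hqL
    apply hpq
    apply hs p hp q hq
    rw [h1, h2, h3, h4]
    linear_combination (t - t') * h0
  set d := (v.1 - u.1) + s * (v.2 - u.2) with hdd
  refine ⟨((v.2 - u.2) / d, u.2 - (v.2 - u.2) / d * (u.1 + s * u.2)), fun z => ?_⟩
  rw [hmem]
  simp only
  constructor
  · rintro ⟨t, h1, h2⟩
    have h3 : z.1 + s * z.2 = u.1 + s * u.2 + t * d := by rw [h1, h2, hdd]; ring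
    rw [h3, h2]
    field_simp
    ring
  · intro h
    have h2 : z.2 = u.2 + ((z.1 + s * z.2) - (u.1 + s * u.2)) / d * (v.2 - u.2) :=
      h.trans (by ring)
    refine ⟨((z.1 + s * z.2) - (u.1 + s * u.2)) / d, ?_, h2⟩
    have h3 : ((z.1 + s * z.2) - (u.1 + s * u.2)) / d * d = (z.1 + s * z.2) - (u.1 + s * u.2) := by
      field_simp
    generalize ((z.1 + s * z.2) - (u.1 + s * u.2)) / d = t at *
    have : d = (v.1 - u.1) + s * (v.2 - u.2) := hdd
    rw [this] at h3
    linear_combination -h3 - s * h2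

/-- Beck's Induced Lines Theorem: if `r` is the maximum richness of a line
induced by an `n`-point set `S`, then `S` induces at least `C · r · (n − r)` lines. -/
theorem beck_induced_lines :
    ∃ C : ℝ, 0 < C ∧ ∀ (S : Finset (ℝ × ℝ)) (n r : ℕ),
      S.card = n →
      (∃ L ∈ InducedLines S, richness S L = r) →
      (∀ L ∈ InducedLines S, richness S L ≤ r) →
      C * (r : ℝ) * ((n : ℝ) - (r : ℝ)) ≤ ((InducedLines S).ncard : ℝ) := by
  classical
  refine ⟨1 / 2 ^ 32, by positivity, ?_⟩
  rintro S n r rfl ⟨L0, hL0, hr0⟩ hmax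
  obtain ⟨s, hs⟩ := Bk.shear S
  let X : ℝ × ℝ → ℝ := fun p => p.1 + s * p.2
  have hline : ∀ L : Set (ℝ × ℝ), ∃ w : ℝ × ℝ, L ∈ InducedLines S →
      ∀ p : ℝ × ℝ, p ∈ L ↔ p.2 = w.1 * X p + w.2 := by
    intro L
    by_cases hL : L ∈ InducedLines S
    · obtain ⟨w, hw⟩ := Bk.line_eq S s hs L hL
      exact ⟨w, fun _ => hw⟩
    · exact ⟨0, fun h => (hL h).elim⟩
  choose w hw using hline
  let B : Set (ℝ × ℝ) → Finset (ℝ × ℝ) := fun L => S.filter fun p => p ∈ L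
  have hrich : ∀ L, richness S L = (B L).card := by
    intro L
    unfold richness
    rw [← Set.ncard_coe_finset]
    congr 1
    ext p; simp [B]
  have hinj : ∀ L ∈ InducedLines S, ∀ L' ∈ InducedLines S, ∀ p q, p ≠ q →
      p ∈ B L → q ∈ B L → p ∈ B L' → q ∈ B L' → L = L' := by
    intro L hL L' hL' p q hpq h1 h2 h3 h4
    obtain ⟨hp, h1⟩ := Finset.mem_filter.1 h1
    obtain ⟨hq, h2⟩ := Finset.mem_filter.1 h2
    have h3 := (Finset.mem_filter.1 h3).2
    have h4 := (Finset.mem_filter.1 h4).2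
    rw [hw L hL] at h1 h2
    rw [hw L' hL'] at h3 h4
    have hX : X p - X q ≠ 0 := sub_ne_zero.2 fun h => hpq (hs p hp q hq h)
    have e1 : (w L).1 = (w L').1 := by
      have : ((w L).1 - (w L').1) * (X p - X q) = 0 := by linarith
      rcases mul_eq_zero.1 this with h | h
      · linarith
      · exact (hX h).elim
    have e2 : (w L).2 = (w L').2 := by rw [e1] at h1; linarith
    ext z
    rw [hw L hL, hw L' hL', e1, e2]
  have htwo : ∀ L ∈ InducedLines S, ∃ p ∈ B L, ∃ q ∈ B L, p ≠ q := by
    rintro L ⟨_, p, hp, q, hq, hpq, h1, h2⟩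
    exact ⟨p, Finset.mem_filter.2 ⟨hp, h1⟩, q, Finset.mem_filter.2 ⟨hq, h2⟩, hpq⟩
  have hfin : (InducedLines S).Finite := by
    apply Set.Finite.of_finite_image (f := B)
    · apply Set.Finite.subset S.powerset.finite_toSet
      rintro _ ⟨L, _, rfl⟩
      exact Finset.mem_coe.2 (Finset.mem_powerset.2 (Finset.filter_subset _ _))
    · intro L hL L' hL' h
      obtain ⟨p, hp, q, hq, hpq⟩ := htwo L hL
      exact hinj L hL L' hL' p q hpq hp hq (h ▸ hp) (h ▸ hq)
  have hmem : ∀ L, L ∈ hfin.toFinset ↔ L ∈ InducedLines S := fun L => hfin.mem_toFinset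
  have main := Bk.abs S hfin.toFinset B (fun L _ => Finset.filter_subset _ _)
    (fun L hL => by
      obtain ⟨p, hp, q, hq, hpq⟩ := htwo L ((hmem L).1 hL)
      exact Finset.one_lt_card.2 ⟨p, hp, q, hq, hpq⟩)
    (fun p hp q hq hpq => by
      have h1 : p ∈ lineThrough p q := left_mem_affineSpan_pair ℝ p q
      have h2 : q ∈ lineThrough p q := right_mem_affineSpan_pair ℝ p q
      exact ⟨lineThrough p q, (hmem _).2 ⟨⟨p, q, hpq, rfl⟩, p, hp, q, hq, hpq, h1, h2⟩,
        Finset.mem_filter.2 ⟨hp, h1⟩, Finset.mem_filter.2 ⟨hq, h2⟩⟩)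
    (fun L hL L' hL' => hinj L ((hmem L).1 hL) L' ((hmem L').1 hL'))
    ?_ r L0 ((hmem L0).2 hL0) (by rw [← hrich, hr0])
    (fun L hL => by rw [← hrich]; exact hmax L ((hmem L).1 hL))
  · rw [Set.ncard_eq_toFinset_card _ hfin]
    rw [mul_assoc, one_div, inv_mul_le_iff₀ (by positivity)]
    exact main
  · intro M hM k hk a
    have hXinj : Set.InjOn X (S : Set (ℝ × ℝ)) := fun p hp q hq h => hs p hp q hq h
    let h : ℝ → ℝ := fun x => (Function.invFunOn X (S : Set (ℝ × ℝ)) x).2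
    have hh : ∀ p ∈ S, h (X p) = p.2 := by
      intro p hp
      have : Function.invFunOn X (S : Set (ℝ × ℝ)) (X p) = p := hXinj.leftInvOn_invFunOn hp
      simp only [h, this]
    have hwinj : Set.InjOn w (M : Set (Set (ℝ × ℝ))) := by
      intro L hL L' hL' he
      have hL := (hmem L).1 (hM hL)
      have hL' := (hmem L').1 (hM hL')
      ext z
      rw [hw L hL, hw L' hL', he]
    have hst := Bk.st (S.image X) h (M.image w) k ?_ a
    · rw [Finset.card_image_of_injOn hwinj, Finset.card_image_of_injOn hXinj] at hst
      exact hst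
    · intro v hv
      obtain ⟨L, hL, rfl⟩ := Finset.mem_image.1 hv
      have hLi := (hmem L).1 (hM hL)
      refine (hk L hL).trans ?_
      apply Finset.card_le_card_of_injOn X
      · intro p hp
        obtain ⟨hp, hpL⟩ := Finset.mem_filter.1 hp
        refine Finset.mem_coe.2 (Finset.mem_filter.2 ⟨Finset.mem_image_of_mem X hp, ?_⟩)
        rw [hh p hp]
        exact (hw L hLi p).1 hpL
      · exact hXinj.mono (fun p hp => (Finset.mem_filter.1 hp).1)
end
end
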